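/- arXiv:1307.8108 — 10 statements merged into one kernel-verified Lean document; each statement's English description precedes it below -/
import Mathlib

section
/- Let A be a filtered ring and M a filtered A-module. If the associated graded module gr M is a flat module over the associated graded ring gr A, then M is a flat A-module. -/
open scoped TensorProduct

theorem aux_proj {G : Type*} [AddCommGroup G] (ℳ : ℕ → AddSubgroup G)
    (h : DirectSum.IsInternal ℳ) :
    ∃ P : ℕ → G →+ G, (∀ d x, P d x ∈ ℳ d) ∧ (∀ d, ∀ x ∈ ℳ d, P d x = x) ∧
      (∀ d e, e ≠ d → ∀ x ∈ ℳ e, P d x = 0) ∧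
      (∀ x, ∃ N, ∀ N', N ≤ N' → x = ∑ d ∈ Finset.range N', P d x) := by
  classical
  let _ := h.chooseDecomposition
  refine ⟨fun d => AddMonoidHom.mk' (fun x => (DirectSum.decompose ℳ x d : G)) ?_, ?_, ?_, ?_, ?_⟩
  · intro a b
    simp
  · intro d x
    exact (DirectSum.decompose ℳ x d).2
  · intro d x hx
    exact DirectSum.decompose_of_mem_same ℳ hx
  · intro d e hne x hx
    exact DirectSum.decompose_of_mem_ne ℳ hx hne
  · intro x
    refine ⟨(DirectSum.decompose ℳ x).support.sup id + 1, fun N' hN => ?_⟩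
    conv_lhs => rw [← DirectSum.sum_support_decompose ℳ x]
    apply Finset.sum_subset
    · intro d hd
      have : d ≤ (DirectSum.decompose ℳ x).support.sup id := Finset.le_sup (f := id) hd
      rw [Finset.mem_range]; omega
    · intro d _ hd
      have := DFinsupp.notMem_support_iff.mp hd
      exact congrArg Subtype.val this

/-- Component of degree `q - d`, or zero if `q < d`. -/
def auxC {R : Type*} [AddCommGroup R] (P : ℕ → R →+ R) (q d : ℕ) (b : R) : R :=
  if d ≤ q then P (q - d) b else 0

theorem aux_comp {R G : Type*} [CommRing R] [AddCommGroup G] [Module R G]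
    (𝒜 : ℕ → AddSubgroup R) (ℳ : ℕ → AddSubgroup G)
    (hsm : ∀ i j, ∀ a ∈ 𝒜 i, ∀ x ∈ ℳ j, a • x ∈ ℳ (i + j))
    (PA : ℕ → R →+ R) (PM : ℕ → G →+ G)
    (hA1 : ∀ d x, PA d x ∈ 𝒜 d) (hA2 : ∀ d, ∀ x ∈ 𝒜 d, PA d x = x)
    (hA3 : ∀ d e, e ≠ d → ∀ x ∈ 𝒜 e, PA d x = 0)
    (hA4 : ∀ x, ∃ N, ∀ N', N ≤ N' → x = ∑ d ∈ Finset.range N', PA d x)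
    (hM2 : ∀ d, ∀ x ∈ ℳ d, PM d x = x)
    (hM3 : ∀ d e, e ≠ d → ∀ x ∈ ℳ e, PM d x = 0)
    (q d : ℕ) (b : R) (y : G) (hy : y ∈ ℳ d) :
    PM q (b • y) = auxC PA q d b • y := by
  have key : ∀ e, ∀ b ∈ 𝒜 e, PM q (b • y) = auxC PA q d b • y := by
    intro e b hb
    have h1 := hsm e d b hb y hy
    unfold auxC
    by_cases h : e + d = q
    · subst h
      rw [hM2 _ _ h1, if_pos (by omega), Nat.add_sub_cancel, hA2 _ _ hb]
    · rw [hM3 _ _ h _ h1]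
      split_ifs with h2
      · rw [hA3 _ e (by omega) _ hb, zero_smul]
      · rw [zero_smul]
  have hadd : ∀ (s : Finset ℕ) (f : ℕ → R), auxC PA q d (∑ i ∈ s, f i) = ∑ i ∈ s, auxC PA q d (f i) := by
    intro s f
    unfold auxC
    split_ifs
    · rw [map_sum]
    · simp
  obtain ⟨N, hN⟩ := hA4 b
  have := hN N le_rfl
  rw [this, hadd, Finset.sum_smul, Finset.sum_smul, map_sum]
  exact Finset.sum_congr rfl fun i _ => key i _ (hA1 _ _)

/-- Homogeneous equational criterion. -/
theorem aux_hom {R G : Type*} [CommRing R] [AddCommGroup G] [Module R G]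
    (𝒜 : ℕ → AddSubgroup R) (ℳ : ℕ → AddSubgroup G)
    (hAint : DirectSum.IsInternal 𝒜) (hMint : DirectSum.IsInternal ℳ)
    (hmul : ∀ i j, ∀ a ∈ 𝒜 i, ∀ x ∈ 𝒜 j, a * x ∈ 𝒜 (i + j))
    (hsm : ∀ i j, ∀ a ∈ 𝒜 i, ∀ x ∈ ℳ j, a • x ∈ ℳ (i + j))
    (hflat : Module.Flat R G) {ι : Type} [Fintype ι] (n : ℕ) (p q : ι → ℕ)
    (hpq : ∀ k, p k + q k = n) (a : ι → R) (x : ι → G) (ha : ∀ k, a k ∈ 𝒜 (p k))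
    (hx : ∀ k, x k ∈ ℳ (q k)) (h0 : ∑ k, a k • x k = 0) :
    ∃ (κ : Type) (_ : Fintype κ) (d : κ → ℕ) (b : ι → κ → R) (y : κ → G),
      (∀ j, y j ∈ ℳ (d j)) ∧ (∀ k j, d j ≤ q k → b k j ∈ 𝒜 (q k - d j)) ∧
      (∀ k j, ¬ d j ≤ q k → b k j = 0) ∧ (∀ k, x k = ∑ j, b k j • y j) ∧
      ∀ j, ∑ k, a k * b k j = 0 := by
  obtain ⟨PA, hA1, hA2, hA3, hA4⟩ := aux_proj 𝒜 hAint
  obtain ⟨PM, hM1, hM2, hM3, hM4⟩ := aux_proj ℳ hMint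
  obtain ⟨l, b, y, hxy, hab⟩ := Module.Flat.isTrivialRelation_of_sum_smul_eq_zero h0
  choose N hN using fun j => hM4 (y j)
  let N0 := Finset.univ.sup N
  have hy : ∀ j, y j = ∑ d ∈ Finset.range N0, PM d (y j) := fun j =>
    hN j N0 (Finset.le_sup (Finset.mem_univ j))
  refine ⟨Fin l × Fin N0, inferInstance, fun j => j.2, fun k j => auxC PA (q k) j.2 (b k j.1),
    fun j => PM j.2 (y j.1), fun j => hM1 _ _, ?_, ?_, ?_, ?_⟩
  · intro k j h
    simp only [auxC, if_pos h]
    exact hA1 _ _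
  · intro k j h
    simp only [auxC, if_neg h]
  · intro k
    rw [← hM2 _ _ (hx k), hxy k, Fintype.sum_prod_type, map_sum]
    refine Finset.sum_congr rfl fun j _ => ?_
    conv_lhs => rw [hy j]
    rw [Finset.smul_sum, map_sum, ← Fin.sum_univ_eq_sum_range (fun d => PM (q k) (b k j • PM d (y j)))]
    exact Finset.sum_congr rfl fun d _ =>
      aux_comp 𝒜 ℳ hsm PA PM hA1 hA2 hA3 hA4 hM2 hM3 _ _ _ _ (hM1 _ _)
  · rintro ⟨j, d⟩
    by_cases hd : (d : ℕ) ≤ n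
    · have := congrArg (PA (n - d)) (hab j)
      rw [map_sum, map_zero] at this
      rw [← this]
      refine Finset.sum_congr rfl fun k _ => ?_
      have h1 := aux_comp 𝒜 𝒜 hmul PA PA hA1 hA2 hA3 hA4 hA2 hA3 (n - d) (p k) (b k j) (a k) (ha k)
      rw [smul_eq_mul, smul_eq_mul] at h1
      rw [mul_comm (a k) (b k j), h1, mul_comm]
      congr 1
      have := hpq k
      simp only [auxC]
      by_cases h2 : (d : ℕ) ≤ q k
      · rw [if_pos h2, if_pos (by omega)]
        congr 2
        omega
      · rw [if_neg h2, if_neg (by omega)]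
    · refine Finset.sum_eq_zero fun k _ => ?_
      have := hpq k
      simp only [auxC]
      rw [if_neg (by omega), mul_zero]

theorem aux_repr {A M : Type*} [CommRing A] [AddCommGroup M] [Module A M]
    (FA : ℕ → AddSubgroup A) (FM : ℕ → AddSubgroup M) (hFMmono : Monotone FM)
    (I : Ideal A) (n : ℕ) (t : I ⊗[A] M)
    (ht : t ∈ AddSubgroup.closure {t : I ⊗[A] M | ∃ (p q : ℕ) (a : I) (x : M),
      p + q < n + 1 ∧ (a : A) ∈ FA p ∧ x ∈ FM q ∧ t = a ⊗ₜ[A] x}) :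
    ∃ (ι : Type) (_ : Fintype ι) (p q : ι → ℕ) (a : ι → I) (x : ι → M),
      (∀ k, p k + q k = n) ∧ (∀ k, (a k : A) ∈ FA (p k)) ∧ (∀ k, x k ∈ FM (q k)) ∧
      t = ∑ k, a k ⊗ₜ[A] x k := by
  induction ht using AddSubgroup.closure_induction with
  | mem t h =>
    obtain ⟨p, q, a, x, hpq, ha, hx, rfl⟩ := h
    refine ⟨Unit, inferInstance, fun _ => p, fun _ => n - p, fun _ => a, fun _ => x,
      fun _ => by dsimp only; omega, fun _ => ha,
      fun _ => hFMmono (by dsimp only; omega) hx, by simp⟩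
  | zero =>
    exact ⟨Empty, inferInstance, fun _ => 0, fun _ => 0, fun _ => 0, fun _ => 0, by simp, by simp,
      by simp, by simp⟩
  | add s t _ _ hs ht =>
    obtain ⟨ι, _, p, q, a, x, h1, h2, h3, rfl⟩ := hs
    obtain ⟨ι', _, p', q', a', x', h1', h2', h3', rfl⟩ := ht
    refine ⟨ι ⊕ ι', inferInstance, Sum.elim p p', Sum.elim q q', Sum.elim a a', Sum.elim x x',
      ?_, ?_, ?_, by simp⟩
    · rintro (k | k)
      exacts [h1 k, h1' k]
    · rintro (k | k)
      exacts [h2 k, h2' k]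
    · rintro (k | k)
      exacts [h3 k, h3' k]
  | neg s _ hs =>
    obtain ⟨ι, _, p, q, a, x, h1, h2, h3, rfl⟩ := hs
    refine ⟨ι, inferInstance, p, q, a, fun k => - x k, h1, h2, fun k => neg_mem (h3 k), ?_⟩
    simp [TensorProduct.tmul_neg]


/-- Let `A` be a filtered ring and `M` a filtered `A`-module.
If the associated graded module `gr M` is flat over the associated graded ring `gr A`,
then `M` is a flat `A`-module.

The associated graded ring/module are encoded as data: a ring `grA` with an internal
grading `𝒜` together with surjections `σ n : FA n →+ grA` onto the graded pieces whose
kernel is `FA (n-1)` (with `FA (-1) = 0`), compatible with multiplication; similarly a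
`grA`-module `grM` with grading `ℳ` and maps `μ n : FM n →+ grM` compatible with the
scalar action. -/
theorem deformations_stmt0
    {A M grA grM : Type*} [CommRing A] [AddCommGroup M] [Module A M]
    [CommRing grA] [AddCommGroup grM] [Module grA grM]
    -- the filtration on the ring A
    (FA : ℕ → AddSubgroup A)
    (hFAmono : Monotone FA) (hFAone : (1 : A) ∈ FA 0)
    (hFAmul : ∀ (n m : ℕ), ∀ a ∈ FA n, ∀ b ∈ FA m, a * b ∈ FA (n + m))
    (hFAexh : ∀ a : A, ∃ n, a ∈ FA n)
    -- the filtration on the module M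
    (FM : ℕ → AddSubgroup M)
    (hFMmono : Monotone FM)
    (hFMsmul : ∀ (n m : ℕ), ∀ a ∈ FA n, ∀ x ∈ FM m, a • x ∈ FM (n + m))
    (hFMexh : ∀ x : M, ∃ n, x ∈ FM n)
    -- grA is the associated graded ring, with graded pieces 𝒜 n ≅ FA n / FA (n-1)
    (𝒜 : ℕ → AddSubgroup grA) (ℳ : ℕ → AddSubgroup grM)
    (hAint : DirectSum.IsInternal 𝒜) (hMint : DirectSum.IsInternal ℳ)
    (σ : ∀ n, FA n →+ grA) (μ : ∀ n, FM n →+ grM)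
    (hσrange : ∀ n, Set.range (σ n) = (𝒜 n : Set grA))
    (hμrange : ∀ n, Set.range (μ n) = (ℳ n : Set grM))
    (hσker0 : ∀ a : FA 0, σ 0 a = 0 → a = 0)
    (hσker : ∀ (n : ℕ) (a : FA (n + 1)), σ (n + 1) a = 0 ↔ (a : A) ∈ FA n)
    (hμker0 : ∀ x : FM 0, μ 0 x = 0 → x = 0)
    (hμker : ∀ (n : ℕ) (x : FM (n + 1)), μ (n + 1) x = 0 ↔ (x : M) ∈ FM n)
    (hσmul : ∀ (n m : ℕ) (a : FA n) (b : FA m),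
      σ (n + m) ⟨(a : A) * (b : A), hFAmul n m a a.2 b b.2⟩ = σ n a * σ m b)
    (hσone : σ 0 ⟨1, hFAone⟩ = 1)
    (hcompat : ∀ (n m : ℕ) (a : FA n) (x : FM m),
      μ (n + m) ⟨(a : A) • (x : M), hFMsmul n m a a.2 x x.2⟩ = σ n a • μ m x)
    -- flatness of the associated graded module
    (hflat : Module.Flat grA grM) :
    Module.Flat A M := by
  classical
  have hmul : ∀ i j, ∀ a ∈ 𝒜 i, ∀ x ∈ 𝒜 j, a * x ∈ 𝒜 (i + j) := by
    intro i j a ha x hx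
    rw [← SetLike.mem_coe, ← hσrange] at ha hx ⊢
    obtain ⟨a, rfl⟩ := ha
    obtain ⟨x, rfl⟩ := hx
    exact ⟨_, hσmul i j a x⟩
  have hsm : ∀ i j, ∀ a ∈ 𝒜 i, ∀ x ∈ ℳ j, a • x ∈ ℳ (i + j) := by
    intro i j a ha x hx
    rw [← SetLike.mem_coe, ← hσrange] at ha
    rw [← SetLike.mem_coe, ← hμrange] at hx ⊢
    obtain ⟨a, rfl⟩ := ha
    obtain ⟨x, rfl⟩ := hx
    exact ⟨_, hcompat i j a x⟩
  -- vanishing symbols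
  have hA0 : ∀ n (a : FA n), σ n a = 0 → (a : A) = 0 ∨ ∃ m, m < n ∧ (a : A) ∈ FA m := by
    intro n a h
    cases n with
    | zero => left; rw [hσker0 a h]; rfl
    | succ n => exact Or.inr ⟨n, by omega, (hσker n a).1 h⟩
  have hM0 : ∀ n (a : FM n), μ n a = 0 → (a : M) = 0 ∨ ∃ m, m < n ∧ (a : M) ∈ FM m := by
    intro n a h
    cases n with
    | zero => left; rw [hμker0 a h]; rfl
    | succ n => exact Or.inr ⟨n, by omega, (hμker n a).1 h⟩
  have hσmul' : ∀ (r n m : ℕ) (_ : n + m = r) (a : FA n) (b : FA m),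
      ∃ c : FA r, (c : A) = a * b ∧ σ r c = σ n a * σ m b := by
    rintro r n m rfl a b
    exact ⟨_, rfl, hσmul n m a b⟩
  have hcompat' : ∀ (r n m : ℕ) (_ : n + m = r) (a : FA n) (b : FM m),
      ∃ c : FM r, (c : M) = (a : A) • (b : M) ∧ μ r c = σ n a • μ m b := by
    rintro r n m rfl a b
    exact ⟨_, rfl, hcompat n m a b⟩
  rw [Module.Flat.iff_lift_lsmul_comp_subtype_injective]
  intro I _
  rw [injective_iff_map_eq_zero]
  let S : ℕ → Set (I ⊗[A] M) := fun n => {t : I ⊗[A] M | ∃ (p q : ℕ) (a : I) (x : M),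
      p + q < n ∧ (a : A) ∈ FA p ∧ x ∈ FM q ∧ t = a ⊗ₜ[A] x}
  let G : ℕ → AddSubgroup (I ⊗[A] M) := fun n => AddSubgroup.closure (S n)
  have hG0 : ∀ t ∈ G 0, t = 0 := by
    intro t ht
    have : S 0 = ∅ := by
      ext t
      simp [S]
    simpa [G, this] using ht
  have hGmono : Monotone G := by
    intro m n hmn
    apply AddSubgroup.closure_mono
    rintro t ⟨p, q, a, x, h, h'⟩
    exact ⟨p, q, a, x, by omega, h'⟩
  have hGexh : ∀ t, ∃ n, t ∈ G n := by
    intro t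
    induction t using TensorProduct.induction_on with
    | zero => exact ⟨0, zero_mem _⟩
    | tmul a x =>
      obtain ⟨p, hp⟩ := hFAexh a
      obtain ⟨q, hq⟩ := hFMexh x
      exact ⟨p + q + 1, AddSubgroup.subset_closure ⟨p, q, a, x, by omega, hp, hq, rfl⟩⟩
    | add s t hs ht =>
      obtain ⟨m, hm⟩ := hs
      obtain ⟨n, hn⟩ := ht
      exact ⟨max m n, add_mem (hGmono (le_max_left _ _) hm) (hGmono (le_max_right _ _) hn)⟩
  have step : ∀ n, ∀ t ∈ G (n + 1),
      TensorProduct.lift ((LinearMap.lsmul A M).comp I.subtype) t = 0 → t ∈ G n := by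
    intro n t ht h0
    obtain ⟨ι, _, p, q, a, x, hpq, ha, hx, rfl⟩ := aux_repr FA FM hFMmono I n t ht
    simp only [map_sum, TensorProduct.lift.tmul, LinearMap.comp_apply, Submodule.subtype_apply,
      LinearMap.lsmul_apply] at h0
    let a' : ∀ k, FA (p k) := fun k => ⟨a k, ha k⟩
    let x' : ∀ k, FM (q k) := fun k => ⟨x k, hx k⟩
    have hgr : ∑ k, σ (p k) (a' k) • μ (q k) (x' k) = 0 := by
      choose c hc1 hc2 using fun k => hcompat' n (p k) (q k) (hpq k) (a' k) (x' k)
      simp_rw [← hc2]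
      rw [← map_sum]
      have : ∑ k, c k = 0 := by
        apply Subtype.ext
        rw [AddSubgroup.val_finsetSum]
        simp_rw [hc1]
        exact h0
      rw [this, map_zero]
    obtain ⟨κ, _, d, b, y, hy, hb, hb0, hxy, hab⟩ := aux_hom 𝒜 ℳ hAint hMint hmul hsm hflat n p q hpq
      (fun k => σ (p k) (a' k)) (fun k => μ (q k) (x' k))
      (fun k => by rw [← SetLike.mem_coe, ← hσrange]; exact ⟨_, rfl⟩)
      (fun k => by rw [← SetLike.mem_coe, ← hμrange]; exact ⟨_, rfl⟩) hgr
    have hY : ∀ j, ∃ Y : FM (d j), μ (d j) Y = y j := by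
      intro j
      have := hy j
      rwa [← SetLike.mem_coe, ← hμrange] at this
    choose Y hY using hY
    have hB : ∀ k j, ∃ B : A, (d j ≤ q k → ∃ B' : FA (q k - d j), (B' : A) = B ∧
        σ _ B' = b k j) ∧ (¬ d j ≤ q k → B = 0) := by
      intro k j
      by_cases h : d j ≤ q k
      · have := hb k j h
        rw [← SetLike.mem_coe, ← hσrange] at this
        obtain ⟨B, hB⟩ := this
        exact ⟨B, fun _ => ⟨B, rfl, hB⟩, fun h' => absurd h h'⟩
      · exact ⟨0, fun h' => absurd h' h, fun _ => rfl⟩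
    choose B hB1 hB0 using hB
    have e : ∑ k, a k ⊗ₜ[A] x k = ∑ k, a k ⊗ₜ[A] (x k - ∑ j, B k j • (Y j : M)) +
        ∑ j, (∑ k, B k j • a k) ⊗ₜ[A] (Y j : M) := by
      simp_rw [TensorProduct.tmul_sub, TensorProduct.tmul_sum, TensorProduct.sum_tmul,
        TensorProduct.smul_tmul]
      rw [Finset.sum_sub_distrib, Finset.sum_comm (γ := κ), sub_add_cancel]
    rw [e]
    refine add_mem (sum_mem fun k _ => ?_) (sum_mem fun j _ => ?_)
    · have : ∀ j, ∃ c : FM (q k), (c : M) = B k j • (Y j : M) ∧ μ (q k) c = b k j • y j := by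
        intro j
        by_cases h : d j ≤ q k
        · obtain ⟨B', h1, h2⟩ := hB1 k j h
          obtain ⟨c, h3, h4⟩ := hcompat' (q k) _ (d j) (by omega) B' (Y j)
          exact ⟨c, by rw [h3, h1], by rw [h4, h2, hY]⟩
        · exact ⟨0, by simp [hB0 k j h], by simp [hb0 k j h]⟩
      choose c hc1 hc2 using this
      have hz : μ (q k) (x' k - ∑ j, c j) = 0 := by
        rw [map_sub, map_sum, hxy k]
        simp_rw [hc2]
        exact sub_self _
      have hv : ((x' k - ∑ j, c j : FM (q k)) : M) = x k - ∑ j, B k j • (Y j : M) := by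
        rw [AddSubgroup.coe_sub, AddSubgroup.val_finsetSum]
        simp_rw [hc1]
        rfl
      rcases hM0 _ _ hz with h | ⟨m, hm, h⟩
      · rw [← hv, h, TensorProduct.tmul_zero]
        exact zero_mem _
      · rw [hv] at h
        have := hpq k
        exact AddSubgroup.subset_closure ⟨p k, m, _, _, by omega, ha k, h, rfl⟩
    · by_cases hd : d j ≤ n
      · have : ∀ k, ∃ c : FA (n - d j), (c : A) = B k j * (a k : A) ∧
            σ _ c = σ (p k) (a' k) * b k j := by
          intro k
          by_cases h : d j ≤ q k
          · obtain ⟨B', h1, h2⟩ := hB1 k j h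
            have := hpq k
            obtain ⟨c, h3, h4⟩ := hσmul' (n - d j) (p k) _ (by omega) (a' k) B'
            exact ⟨c, by rw [h3, h1, mul_comm], by rw [h4, h2]⟩
          · exact ⟨0, by simp [hB0 k j h], by simp [hb0 k j h]⟩
        choose c hc1 hc2 using this
        have hz : σ (n - d j) (∑ k, c k) = 0 := by
          rw [map_sum]
          simp_rw [hc2]
          exact hab j
        have hv : ((∑ k, c k : FA (n - d j)) : A) = ((∑ k, B k j • a k : I) : A) := by
          rw [AddSubgroup.val_finsetSum, Submodule.coe_sum]
          simp_rw [hc1]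
          rfl
        rcases hA0 _ _ hz with h | ⟨m, hm, h⟩
        · rw [hv] at h
          have h' : (∑ k, B k j • a k : I) = 0 := Subtype.ext h
          rw [h', TensorProduct.zero_tmul]
          exact zero_mem _
        · rw [hv] at h
          exact AddSubgroup.subset_closure ⟨m, d j, _, _, by omega, h, (Y j).2, rfl⟩
      · have h' : (∑ k, B k j • a k : I) = 0 := by
          refine Finset.sum_eq_zero fun k _ => ?_
          have := hpq k
          rw [hB0 k j (by omega), zero_smul]
        rw [h', TensorProduct.zero_tmul]
        exact zero_mem _
  intro t h0
  obtain ⟨n, hn⟩ := hGexh t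
  induction n with
  | zero => exact hG0 t hn
  | succ n ih => exact ih (step n t hn h0)
end

section
/- Let A be a filtered ring, B ⊆ A₀ a subring, and M a filtered A-module that is finitely generated as an A-module. Then M and the associated graded module gr M = ⊕_{n≥0} Mₙ/M_{n−1} have the same length as B-modules (as elements of ℕ ∪ {∞}). -/
open DirectSum

/-- The length of a module is the supremum of the lengths of the pieces of an exhaustive chain. -/
theorem length_eq_iSup_of_exhaustive {R M : Type*} [Ring R] [AddCommGroup M] [Module R M]
    (N : ℕ → Submodule R M) (hmono : Monotone N) (hexh : ∀ x : M, ∃ n, x ∈ N n) :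
    Module.length R M = ⨆ n, Module.length R (N n) := by
  apply le_antisymm
  · by_cases htop : (⨆ n, Module.length R (N n)) = ⊤
    · rw [htop]; exact le_top
    · obtain ⟨n, hn⟩ := ENat.exists_eq_iSup_of_lt_top (lt_top_iff_ne_top.mpr htop)
      have hN : N n = ⊤ := by
        rw [eq_top_iff]
        intro x _
        obtain ⟨m, hm⟩ := hexh x
        by_contra hx
        have hlt : N n < N (max n m) :=
          lt_of_le_of_ne (hmono (le_max_left _ _)) fun h =>
            hx (h ▸ hmono (le_max_right n m) hm)
        have h1 := Order.height_strictMono hlt (by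
          rw [← Module.length_submodule, hn]; exact lt_top_iff_ne_top.mpr htop)
        rw [← Module.length_submodule, ← Module.length_submodule, hn] at h1
        exact absurd (le_iSup (fun n => Module.length R (N n)) (max n m)) (not_le.mpr h1)
      rw [← hn, hN, Module.length_top]
  · exact iSup_le fun n => Module.length_le_of_injective (N n).subtype (N n).subtype_injective

/-- The pieces `⨁_{i < n}` of a direct sum over `ℕ`. -/
def lowPiece {R : Type*} [Ring R] (Q : ℕ → Type*) [∀ n, AddCommGroup (Q n)]
    [∀ n, Module R (Q n)] (n : ℕ) : Submodule R (⨁ n, Q n) where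
  carrier := {x | ∀ i, n ≤ i → x i = 0}
  add_mem' := by
    intro a b ha hb i hi
    rw [DirectSum.add_apply, ha i hi, hb i hi, add_zero]
  zero_mem' := by intro i _; rfl
  smul_mem' := by
    intro c x hx i hi
    rw [DirectSum.smul_apply, hx i hi, smul_zero]

theorem length_lowPiece {R : Type*} [Ring R] (Q : ℕ → Type*) [∀ n, AddCommGroup (Q n)]
    [∀ n, Module R (Q n)] (n : ℕ) :
    Module.length R (lowPiece (R := R) Q n) = ∑ i ∈ Finset.range n, Module.length R (Q i) := by
  induction n with
  | zero =>
    have : lowPiece (R := R) Q 0 = ⊥ := by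
      rw [eq_bot_iff]
      intro x hx
      rw [Submodule.mem_bot]
      ext i
      rw [hx i (Nat.zero_le i)]; rfl
    rw [this, Module.length_bot]; simp
  | succ n ih =>
    have hle : lowPiece (R := R) Q n ≤ lowPiece Q (n + 1) :=
      fun x hx i hi => hx i (by omega)
    rw [Finset.sum_range_succ, ← ih]
    refine Module.length_eq_add_of_exact (Submodule.inclusion hle)
      ((DirectSum.component R ℕ Q n).comp (lowPiece Q (n + 1)).subtype)
      (Submodule.inclusion_injective hle) ?_ ?_
    · intro q
      refine ⟨⟨DirectSum.lof R ℕ Q n q, ?_⟩, ?_⟩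
      · intro i hi
        exact DirectSum.of_eq_of_ne _ _ _ (by omega)
      · exact DirectSum.component.lof_self R n q
    · rintro ⟨x, hx⟩
      constructor
      · intro h
        refine ⟨⟨x, ?_⟩, rfl⟩
        intro i hi
        rcases hi.eq_or_lt with rfl | hi
        · exact h
        · exact hx i hi
      · rintro ⟨⟨y, hy⟩, h⟩
        have : y = x := congrArg Subtype.val h
        subst this
        exact hy n le_rfl

theorem length_directSum_nat {R : Type*} [Ring R] (Q : ℕ → Type*) [∀ n, AddCommGroup (Q n)]
    [∀ n, Module R (Q n)] :
    Module.length R (⨁ n, Q n) = ⨆ n, ∑ i ∈ Finset.range n, Module.length R (Q i) := by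
  classical
  rw [length_eq_iSup_of_exhaustive (lowPiece (R := R) Q)]
  · simp_rw [length_lowPiece]
  · intro m n hmn x hx i hi
    exact hx i (hmn.trans hi)
  · intro x
    refine ⟨x.support.sup id + 1, fun i hi => ?_⟩
    by_contra h
    have : i ≤ x.support.sup id := Finset.le_sup (f := id) (DFinsupp.mem_support_iff.mpr h)
    omega

theorem krullDim_directSum_nat {R : Type*} [Ring R] (Q : ℕ → Type*) [∀ n, AddCommGroup (Q n)]
    [∀ n, Module R (Q n)] :
    Order.krullDim (Submodule R (⨁ n, Q n)) =
      ((⨆ n, ∑ i ∈ Finset.range n, Module.length R (Q i) : ℕ∞) : WithBot ℕ∞) := by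
  rw [← length_directSum_nat, Module.coe_length]

theorem length_step {R M : Type*} [Ring R] [AddCommGroup M] [Module R M]
    (P N : Submodule R M) (h : P ≤ N) :
    Module.length R N =
      Module.length R P + Module.length R (N ⧸ Submodule.comap N.subtype P) := by
  refine Module.length_eq_add_of_exact (Submodule.inclusion h)
    (Submodule.mkQ _) (Submodule.inclusion_injective h) (Submodule.mkQ_surjective _) ?_
  rw [LinearMap.exact_iff, Submodule.ker_mkQ, Submodule.range_inclusion]

/-- Let `A` be a filtered ring, `B ⊆ A₀` a subring, and `M` a filtered
`A`-module that is finitely generated over `A`. Then `M` and the associated graded module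
`gr M = ⊕ₙ Mₙ/Mₙ₋₁` (with `M₋₁ = 0`) have the same length as `B`-modules.

The length of a module is the Krull dimension of its lattice of submodules (the supremum
of the lengths of chains of submodules), an element of `ℕ∞ ∪ {⊥}`. Each `Mₙ` is a
`B`-submodule of `M` (this is automatic from `B ⊆ A₀` and `Aₙ·Mₘ ⊆ Mₙ₊ₘ`), so the
filtration is recorded as a family of `B`-submodules together with the `A`-module
filtration conditions. -/
theorem deformations_stmt3
    {A M : Type*} [CommRing A] [AddCommGroup M] [Module A M]
    (B : Subring A)
    -- the filtration on the ring A
    (FA : ℕ → AddSubgroup A)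
    (hFAmono : Monotone FA) (hFAone : (1 : A) ∈ FA 0)
    (hFAmul : ∀ (n m : ℕ), ∀ a ∈ FA n, ∀ b ∈ FA m, a * b ∈ FA (n + m))
    (hFAexh : ∀ a : A, ∃ n, a ∈ FA n)
    -- B is a subring of A₀
    (hB : (B : Set A) ⊆ FA 0)
    -- the filtration on the module M (each piece is in particular a B-submodule)
    (FM : ℕ → Submodule ↥B M)
    (hFMmono : Monotone FM)
    (hFMsmul : ∀ (n m : ℕ), ∀ a ∈ FA n, ∀ x ∈ FM m, a • x ∈ FM (n + m))
    (hFMexh : ∀ x : M, ∃ n, x ∈ FM n)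
    -- M is a finitely generated A-module
    (hfg : Module.Finite A M) :
    Order.krullDim (Submodule ↥B M) =
      Order.krullDim (Submodule ↥B
        (⨁ n : ℕ, (↥(FM n) ⧸ Submodule.comap (FM n).subtype
          (match n with
            | 0 => (⊥ : Submodule ↥B M)
            | Nat.succ m => FM m)))) := by
  refine (Module.coe_length B M).symm.trans (Eq.trans ?_ (krullDim_directSum_nat (R := B)
    (fun n : ℕ => (↥(FM n) ⧸ Submodule.comap (FM n).subtype
          (match n with
            | 0 => (⊥ : Submodule ↥B M)
            | Nat.succ m => FM m)))).symm)
  congr 1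
  rw [length_eq_iSup_of_exhaustive FM hFMmono hFMexh]
  have key : ∀ n, Module.length B (FM n) = ∑ i ∈ Finset.range (n + 1),
      Module.length B (↥(FM i) ⧸ Submodule.comap (FM i).subtype
          (match i with
            | 0 => (⊥ : Submodule ↥B M)
            | Nat.succ m => FM m)) := by
    intro n
    induction n with
    | zero =>
      rw [Finset.sum_range_one, length_step ⊥ (FM 0) bot_le, Module.length_bot, zero_add]
    | succ n ih =>
      rw [Finset.sum_range_succ, ← ih]
      exact length_step (FM n) (FM (n + 1)) (hFMmono (Nat.le_succ n))
  simp_rw [key]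
  apply le_antisymm
  · exact iSup_le fun n => le_iSup_of_le (n + 1) le_rfl
  · exact iSup_le fun n => le_iSup_of_le n
      (Finset.sum_le_sum_of_subset (Finset.range_mono (Nat.le_succ n)))
end

section
/- Macaulay duality: let k be a field of characteristic zero, T = k[y₁,…,yₙ], S = k[x₁,…,xₙ], with T acting on S by letting yᵢ act as ∂/∂xᵢ (write ∂ ∘ f for this action). (1) If I is an ideal of T containing (y₁,…,yₙ)^N for some N, then I^⊥ := {f ∈ S : ∂ ∘ f = 0 for all ∂ ∈ I} is a finite-dimensional T-submodule of S with dim_k I^⊥ = dim_k T/I, and {∂ ∈ T : ∂ ∘ f = 0 for all f ∈ I^⊥} = I. (2) Conversely, if M ⊆ S is a finite-dimensional k-subspace closed under the action of T (equivalently, closed under all partial derivatives ∂/∂xᵢ), then M^⊥ := {∂ ∈ T : ∂ ∘ f = 0 for all f ∈ M} is an ideal of T containing a power of (y₁,…,yₙ), with dim_k T/M^⊥ = dim_k M and {f ∈ S : ∂ ∘ f = 0 for all ∂ ∈ M^⊥} = M. -/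
/-- The apolarity action of `T = k[y₁,…,yₙ]` on `S = k[x₁,…,xₙ]`, in which `yᵢ` acts as
`∂/∂xᵢ`: a polynomial `D = Σ_a c_a y^a` acts as the constant-coefficient differential
operator `Σ_a c_a ∂^a`, so that
`apolar D f = Σ_{a,b} c_a·f_b·(∏ᵢ bᵢ(bᵢ-1)⋯(bᵢ-aᵢ+1))·x^{b-a}`. -/
noncomputable def apolar {k : Type*} [CommSemiring k] {n : ℕ}
    (D f : MvPolynomial (Fin n) k) : MvPolynomial (Fin n) k :=
  ∑ a ∈ D.support, ∑ b ∈ f.support,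
    MvPolynomial.monomial (b - a)
      (D.coeff a * f.coeff b * ∏ i : Fin n, ((b i).descFactorial (a i) : k))


open MvPolynomial in
/-- The apolar action as a bilinear map. -/
noncomputable def apL (k : Type*) [Field k] (n : ℕ) :
    MvPolynomial (Fin n) k →ₗ[k] MvPolynomial (Fin n) k →ₗ[k] MvPolynomial (Fin n) k :=
  (basisMonomials (Fin n) k).constr k fun a =>
    (basisMonomials (Fin n) k).constr k fun b =>
      monomial (b - a) (∏ i : Fin n, ((b i).descFactorial (a i) : k))

section
open MvPolynomial
variable {k : Type*} [Field k] {n : ℕ}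

lemma apL_mon (a b : Fin n →₀ ℕ) :
    apL k n (monomial a 1) (monomial b 1) =
      monomial (b - a) (∏ i : Fin n, ((b i).descFactorial (a i) : k)) := by
  have h : ∀ c, basisMonomials (Fin n) k c = monomial c 1 :=
    fun c => congrFun (coe_basisMonomials (σ := Fin n) (R := k)) c
  rw [apL, ← h a, Module.Basis.constr_basis, ← h b, Module.Basis.constr_basis]

lemma apL_mon' (a b : Fin n →₀ ℕ) (c d : k) :
    apL k n (monomial a c) (monomial b d) =
      monomial (b - a) (c * d * ∏ i : Fin n, ((b i).descFactorial (a i) : k)) := by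
  have h1 : (monomial a c : MvPolynomial (Fin n) k) = c • monomial a 1 := by
    simp [smul_monomial]
  have h2 : (monomial b d : MvPolynomial (Fin n) k) = d • monomial b 1 := by
    simp [smul_monomial]
  rw [h1, h2, LinearMap.map_smul₂, map_smul, apL_mon, smul_monomial, smul_monomial]
  simp [mul_assoc]

lemma apolar_eq (D f : MvPolynomial (Fin n) k) : apolar D f = apL k n D f := by
  conv_rhs => rw [D.as_sum, f.as_sum]
  simp only [map_sum, LinearMap.sum_apply, apL_mon']
  rw [apolar, Finset.sum_comm]

lemma bilin_ext {W : Type*} [AddCommGroup W] [Module k W]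
    {A B : MvPolynomial (Fin n) k →ₗ[k] W}
    (h : ∀ a, A (monomial a 1) = B (monomial a 1)) : A = B := by
  refine (basisMonomials (Fin n) k).ext fun a => ?_
  simpa using h a

lemma apL_mul (D E f : MvPolynomial (Fin n) k) :
    apL k n (D * E) f = apL k n D (apL k n E f) := by
  have key : ∀ a b c : Fin n →₀ ℕ, apL k n (monomial a 1 * monomial b 1) (monomial c 1) =
      apL k n (monomial a 1) (apL k n (monomial b 1) (monomial c 1)) := by
    intro a b c
    rw [monomial_mul, mul_one, apL_mon, apL_mon, apL_mon']
    have e : c - (a + b) = c - b - a := by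
      rw [add_comm, tsub_add_eq_tsub_tsub]
    rw [e]
    congr 1
    rw [one_mul, ← Finset.prod_mul_distrib]
    refine Finset.prod_congr rfl fun i _ => ?_
    have := Nat.descFactorial_mul_descFactorial (k := b i) (m := a i + b i) (n := c i) (by omega)
    rw [Nat.add_sub_cancel] at this
    simp only [Finsupp.add_apply, Finsupp.tsub_apply]
    rw [← this]; push_cast; ring
  have h1 : ∀ a b, (apL k n (monomial a 1 * monomial b 1)) =
      (apL k n (monomial a 1)) ∘ₗ (apL k n (monomial b 1)) := fun a b =>
    bilin_ext fun c => key a b c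
  have h2 : ∀ a, (apL k n) ∘ₗ (LinearMap.mulLeft k (monomial a 1)) =
      (LinearMap.llcomp k _ _ _ (apL k n (monomial a 1))) ∘ₗ (apL k n) := fun a =>
    bilin_ext fun b => h1 a b
  have h3 : (apL k n) ∘ₗ (LinearMap.mulRight k E) =
      (LinearMap.lcomp k _ (apL k n E)) ∘ₗ (apL k n) :=
    bilin_ext fun a => by
      have := LinearMap.congr_fun (h2 a) E
      exact this
  simpa using LinearMap.congr_fun (LinearMap.congr_fun h3 D) f

/-- factorial of a multi-index -/
noncomputable def mfac (k : Type*) [Field k] {n : ℕ} (a : Fin n →₀ ℕ) : k :=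
  ∏ i : Fin n, ((a i).factorial : k)

lemma mfac_ne [CharZero k] (a : Fin n →₀ ℕ) : mfac k a ≠ 0 :=
  Finset.prod_ne_zero_iff.2 fun i _ => by exact_mod_cast (a i).factorial_ne_zero

/-- the scalar pairing -/
noncomputable def pr (k : Type*) [Field k] (n : ℕ) :
    MvPolynomial (Fin n) k →ₗ[k] MvPolynomial (Fin n) k →ₗ[k] k :=
  (apL k n).compr₂ (lcoeff k 0)

lemma pr_apply (D f : MvPolynomial (Fin n) k) : pr k n D f = coeff 0 (apL k n D f) := rfl

lemma pr_mon (a b : Fin n →₀ ℕ) :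
    pr k n (monomial a 1) (monomial b 1) = if a = b then mfac k a else 0 := by
  rw [pr_apply, apL_mon, coeff_monomial]
  split_ifs with h1 h2 h2
  · subst h2; simp [mfac, Nat.descFactorial_self]
  · have : ∃ i, b i < a i := by
      by_contra! hc
      exact h2 (le_antisymm (fun i => hc i) (tsub_eq_zero_iff_le.1 h1))
    obtain ⟨i, hi⟩ := this
    exact Finset.prod_eq_zero (Finset.mem_univ i)
      (by rw [Nat.descFactorial_eq_zero_iff_lt.2 hi]; simp)
  · subst h2; simp at h1
  · rfl

lemma pr_symm (D f : MvPolynomial (Fin n) k) : pr k n D f = pr k n f D := by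
  have : pr k n = (pr k n).flip := bilin_ext fun a => bilin_ext fun b => by
    rw [LinearMap.flip_apply, pr_mon, pr_mon]
    by_cases h : a = b
    · subst h; rfl
    · rw [if_neg h, if_neg (Ne.symm h)]
  exact LinearMap.congr_fun (LinearMap.congr_fun this D) f

lemma pr_mon_left (a : Fin n →₀ ℕ) (f : MvPolynomial (Fin n) k) :
    pr k n (monomial a 1) f = mfac k a * coeff a f := by
  have : pr k n (monomial a 1) = mfac k a • lcoeff k a := bilin_ext fun b => by
    rw [pr_mon]
    simp [coeff_monomial, eq_comm]
  rw [this]; simp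

lemma pr_mul (D E f : MvPolynomial (Fin n) k) : pr k n (D * E) f = pr k n D (apL k n E f) := by
  rw [pr_apply, apL_mul, pr_apply]

lemma eq_zero_of_pr [CharZero k] {f : MvPolynomial (Fin n) k} (h : ∀ D, pr k n D f = 0) :
    f = 0 := by
  ext a
  have := h (monomial a 1)
  rw [pr_mon_left] at this
  simpa [mfac_ne] using this

/-- realize a functional by a polynomial up to degree `N`. -/
lemma exists_rep [CharZero k] (φ : MvPolynomial (Fin n) k →ₗ[k] k) (N : ℕ) :
    ∃ f : MvPolynomial (Fin n) k, ∀ a : Fin n →₀ ℕ,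
      pr k n (monomial a 1) f = if a.degree < N then φ (monomial a 1) else 0 := by
  have hfin : {a : Fin n →₀ ℕ | a.degree < N}.Finite := Finsupp.finite_of_degree_lt N
  refine ⟨∑ a ∈ hfin.toFinset, monomial a ((mfac k a)⁻¹ * φ (monomial a 1)), fun a => ?_⟩
  rw [pr_mon_left, coeff_sum]
  simp only [coeff_monomial, Finset.sum_ite_eq', Set.Finite.mem_toFinset, Set.mem_ofPred_eq]
  split_ifs
  · rw [← mul_assoc, mul_inv_cancel₀ (mfac_ne a), one_mul]
  · simp

lemma perp_iff [CharZero k] (I : Ideal (MvPolynomial (Fin n) k)) (f : MvPolynomial (Fin n) k) :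
    (∀ D ∈ I, apL k n D f = 0) ↔ ∀ D ∈ I, pr k n D f = 0 := by
  refine ⟨fun h D hD => by rw [pr_apply, h D hD, coeff_zero], fun h D hD => ?_⟩
  refine eq_zero_of_pr fun E => ?_
  rw [← pr_mul]
  exact h _ (I.mul_mem_left E hD)

lemma part1 [CharZero k] (I : Ideal (MvPolynomial (Fin n) k)) (N : ℕ)
    (hI : (idealOfVars (Fin n) k) ^ N ≤ I) (V : Submodule k (MvPolynomial (Fin n) k))
    (hV : ∀ f, f ∈ V ↔ ∀ D ∈ I, apL k n D f = 0) :
    FiniteDimensional k V ∧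
    Module.finrank k V = Module.finrank k (MvPolynomial (Fin n) k ⧸ I) ∧
    ∀ D, (∀ f ∈ V, apL k n D f = 0) → D ∈ I := by
  have hmon : ∀ a : Fin n →₀ ℕ, N ≤ a.degree → (monomial a 1 : MvPolynomial (Fin n) k) ∈ I := by
    intro a ha
    refine hI ((mem_pow_idealOfVars_iff _ _).2 fun x hx => ?_)
    rw [Finset.mem_singleton.1 (support_monomial_subset hx)]
    exact ha
  have hV' : ∀ f, f ∈ V ↔ ∀ D ∈ I, pr k n D f = 0 := fun f => (hV f).trans (perp_iff I f)
  have hdeg : V ≤ restrictTotalDegree (Fin n) k N := by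
    intro f hf
    rw [mem_restrictTotalDegree]
    refine Finset.sup_le fun a ha => ?_
    by_contra hc
    have hc' : N ≤ a.degree := (not_le.1 hc).le
    have := (hV' f).1 hf _ (hmon a hc')
    rw [pr_mon_left] at this
    rw [mem_support_iff] at ha
    exact (mul_ne_zero (mfac_ne a) ha) this
  have hrep : ∀ φ : MvPolynomial (Fin n) k →ₗ[k] k, (∀ D ∈ I, φ D = 0) →
      ∃ f ∈ V, ∀ D, pr k n D f = φ D := by
    intro φ hφ
    obtain ⟨f, hf⟩ := exists_rep φ N
    have : (pr k n).flip f = φ := bilin_ext fun a => by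
      rw [LinearMap.flip_apply, hf]
      split_ifs with h
      · rfl
      · exact (hφ _ (hmon a (not_lt.1 h))).symm
    have h2 : ∀ D, pr k n D f = φ D := fun D => LinearMap.congr_fun this D
    exact ⟨f, (hV' f).2 fun D hD => by rw [h2, hφ D hD], h2⟩
  refine ⟨Submodule.finiteDimensional_of_le hdeg, ?_, ?_⟩
  · let J := I.restrictScalars k
    have e1 : Module.finrank k (MvPolynomial (Fin n) k ⧸ I) = Module.finrank k J.dualAnnihilator := by
      rw [← LinearEquiv.finrank_eq J.dualQuotEquivDualAnnihilator, Subspace.dual_finrank_eq]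
      exact LinearEquiv.finrank_eq (Submodule.Quotient.restrictScalarsEquiv k I).symm
    rw [e1]
    let F : V →ₗ[k] J.dualAnnihilator := ((pr k n).flip.comp V.subtype).codRestrict _ (by
      intro f
      rw [Submodule.mem_dualAnnihilator]
      exact fun D hD => (hV' f).1 f.2 D hD)
    refine LinearEquiv.finrank_eq (LinearEquiv.ofBijective F ⟨?_, ?_⟩)
    · rw [injective_iff_map_eq_zero]
      intro f hf
      have h0 : (pr k n).flip f.1 = 0 := congrArg Subtype.val hf
      exact Subtype.ext (eq_zero_of_pr fun D => LinearMap.congr_fun h0 D)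
    · intro φ
      obtain ⟨f, hfV, hf⟩ := hrep φ.1 ((Submodule.mem_dualAnnihilator _).1 φ.2)
      exact ⟨⟨f, hfV⟩, Subtype.ext (LinearMap.ext hf)⟩
  · intro D hD
    by_contra hn
    obtain ⟨φ, h1, h2⟩ := Submodule.exists_le_ker_of_notMem (p := I.restrictScalars k) (v := D) hn
    obtain ⟨f, hfV, hf⟩ := hrep φ fun E hE => h2 hE
    apply h1
    rw [← hf, pr_apply, hD f hfV, coeff_zero]

lemma pr_congr (N : ℕ) (f D : MvPolynomial (Fin n) k) (φ : MvPolynomial (Fin n) k →ₗ[k] k)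
    (hD : ∀ a : Fin n →₀ ℕ,
      pr k n (monomial a 1) D = if a.degree < N then φ (monomial a 1) else 0)
    (hf : f.totalDegree < N) : pr k n D f = φ f := by
  rw [pr_symm, f.as_sum]
  simp only [map_sum, LinearMap.sum_apply]
  refine Finset.sum_congr rfl fun a ha => ?_
  have h1 : (monomial a (coeff a f) : MvPolynomial (Fin n) k) = coeff a f • monomial a 1 := by
    simp [smul_monomial]
  have h2 : a.degree < N := lt_of_le_of_lt (le_totalDegree ha) hf
  rw [h1, LinearMap.map_smul₂, map_smul, hD, if_pos h2]

lemma pr_pow_zero (N : ℕ) (p f : MvPolynomial (Fin n) k) (hp : p ∈ idealOfVars (Fin n) k ^ N)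
    (hf : f.totalDegree < N) : pr k n p f = 0 := by
  rw [p.as_sum]
  simp only [map_sum, LinearMap.sum_apply]
  refine Finset.sum_eq_zero fun a ha => ?_
  have h1 : (monomial a (coeff a p) : MvPolynomial (Fin n) k) = coeff a p • monomial a 1 := by
    simp [smul_monomial]
  have h2 : N ≤ a.degree := (mem_pow_idealOfVars_iff _ _).1 hp a ha
  have h3 : coeff a f = 0 := coeff_eq_zero_of_totalDegree_lt (lt_of_lt_of_le hf h2)
  rw [h1, LinearMap.map_smul₂, pr_mon_left, h3, mul_zero, smul_zero]

lemma exists_bound (M : Submodule k (MvPolynomial (Fin n) k)) (hM : FiniteDimensional k M) :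
    ∃ N, ∀ f ∈ M, f.totalDegree < N := by
  obtain ⟨s, hs⟩ := Module.Finite.iff_fg.1 hM
  refine ⟨s.sup totalDegree + 1, fun f hf => Nat.lt_succ_of_le ?_⟩
  have : M ≤ restrictTotalDegree (Fin n) k (s.sup totalDegree) := by
    rw [← hs, Submodule.span_le]
    intro g hg
    exact (mem_restrictTotalDegree _ _ _).2 (Finset.le_sup (f := totalDegree) hg)
  exact (mem_restrictTotalDegree _ _ _).1 (this hf)

/-- the annihilator of `I` in `S` -/
noncomputable def perpS (I : Ideal (MvPolynomial (Fin n) k)) :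
    Submodule k (MvPolynomial (Fin n) k) where
  carrier := {f | ∀ D ∈ I, apL k n D f = 0}
  add_mem' := fun ha hb D hD => by rw [map_add, ha D hD, hb D hD, add_zero]
  zero_mem' := fun D _ => map_zero _
  smul_mem' := fun c f hf D hD => by rw [map_smul, hf D hD, smul_zero]

/-- the annihilator of `M` in `T` -/
noncomputable def perpT (M : Submodule k (MvPolynomial (Fin n) k)) :
    Ideal (MvPolynomial (Fin n) k) where
  carrier := {D | ∀ f ∈ M, apL k n D f = 0}
  add_mem' := fun ha hb f hf => by
    rw [map_add, LinearMap.add_apply, ha f hf, hb f hf, add_zero]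
  zero_mem' := fun f _ => by simp
  smul_mem' := fun c D hD f hf => by rw [smul_eq_mul, apL_mul, hD f hf, map_zero]

lemma perp_perp [CharZero k] (M : Submodule k (MvPolynomial (Fin n) k))
    (hM : FiniteDimensional k M) (hc : ∀ D, ∀ f ∈ M, apL k n D f ∈ M)
    (f : MvPolynomial (Fin n) k) (hf : ∀ D ∈ perpT M, apL k n D f = 0) : f ∈ M := by
  by_contra hn
  obtain ⟨N, hN⟩ := exists_bound M hM
  obtain ⟨φ, h1, h2⟩ := Submodule.exists_le_ker_of_notMem hn
  obtain ⟨D, hD⟩ := exists_rep φ (N + f.totalDegree + 1)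
  have hDI : D ∈ perpT M := by
    intro g hg
    refine eq_zero_of_pr fun E => ?_
    rw [← pr_mul, mul_comm, pr_mul,
      pr_congr _ _ _ φ hD (by have := hN _ (hc E g hg); omega)]
    exact h2 (hc E g hg)
  apply h1
  rw [← pr_congr _ f D φ hD (by omega), pr_apply, hf D hDI, coeff_zero]

end

/-- **Macaulay duality.** Let `k` be a field of characteristic zero,
`T = k[y₁,…,yₙ]` acting on `S = k[x₁,…,xₙ]` by `yᵢ ↦ ∂/∂xᵢ`.
(1) If `I ⊴ T` contains `(y₁,…,yₙ)^N` for some `N`, then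
`I^⊥ = {f : ∂ ∘ f = 0 for all ∂ ∈ I}` is a finite-dimensional `T`-submodule of `S` with
`dim_k I^⊥ = dim_k T/I` and `(I^⊥)^⊥ = I`.
(2) Conversely, if `M ⊆ S` is a finite-dimensional `k`-subspace closed under the action
of `T`, then `M^⊥ = {∂ : ∂ ∘ f = 0 for all f ∈ M}` is an ideal of `T` containing a power
of `(y₁,…,yₙ)`, with `dim_k T/M^⊥ = dim_k M` and `(M^⊥)^⊥ = M`. -/
theorem deformations_stmt7 {k : Type*} [Field k] [CharZero k] {n : ℕ} :
    (∀ (I : Ideal (MvPolynomial (Fin n) k)) (N : ℕ),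
      (Ideal.span (Set.range (MvPolynomial.X : Fin n → MvPolynomial (Fin n) k))) ^ N ≤ I →
      ∃ V : Submodule k (MvPolynomial (Fin n) k),
        (V : Set (MvPolynomial (Fin n) k)) = {f | ∀ D ∈ I, apolar D f = 0} ∧
        (∀ D : MvPolynomial (Fin n) k, ∀ f ∈ V, apolar D f ∈ V) ∧
        FiniteDimensional k ↥V ∧
        Module.finrank k ↥V = Module.finrank k (MvPolynomial (Fin n) k ⧸ I) ∧
        {D : MvPolynomial (Fin n) k | ∀ f ∈ V, apolar D f = 0} = (I : Set _))
    ∧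
    (∀ M : Submodule k (MvPolynomial (Fin n) k), FiniteDimensional k ↥M →
      (∀ D : MvPolynomial (Fin n) k, ∀ f ∈ M, apolar D f ∈ M) →
      ∃ I : Ideal (MvPolynomial (Fin n) k),
        (I : Set (MvPolynomial (Fin n) k)) = {D | ∀ f ∈ M, apolar D f = 0} ∧
        (∃ N : ℕ,
          (Ideal.span (Set.range (MvPolynomial.X : Fin n → MvPolynomial (Fin n) k))) ^ N
            ≤ I) ∧
        Module.finrank k (MvPolynomial (Fin n) k ⧸ I) = Module.finrank k ↥M ∧
        {f : MvPolynomial (Fin n) k | ∀ D ∈ I, apolar D f = 0} = (M : Set _)) := by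
  simp only [apolar_eq]
  refine ⟨fun I N hI => ?_, fun M hM hc => ?_⟩
  · obtain ⟨h1, h2, h3⟩ := part1 I N hI (perpS I) fun f => Iff.rfl
    refine ⟨perpS I, rfl, ?_, h1, h2, ?_⟩
    · intro D f hf E hE
      rw [← apL_mul]
      exact hf _ (I.mul_mem_right D hE)
    · ext D
      exact ⟨fun h => h3 D h, fun hD f hf => hf D hD⟩
  · obtain ⟨N, hN⟩ := exists_bound M hM
    have hpow : (MvPolynomial.idealOfVars (Fin n) k) ^ N ≤ perpT M := by
      intro p hp f hf
      refine eq_zero_of_pr fun E => ?_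
      rw [← pr_mul]
      exact pr_pow_zero N _ f (Ideal.mul_mem_left _ E hp) (hN f hf)
    have hiff : ∀ f, f ∈ M ↔ ∀ D ∈ perpT M, apL k n D f = 0 := fun f =>
      ⟨fun hf D hD => hD f hf, fun h => perp_perp M hM hc f h⟩
    obtain ⟨_, h2, _⟩ := part1 (perpT M) N hpow M hiff
    refine ⟨perpT M, rfl, ⟨N, hpow⟩, h2.symm, ?_⟩
    ext f
    exact (hiff f).symm
end

section
/- Let k be a field of characteristic zero and f ∈ S = k[x₁,…,xₙ] a nonzero polynomial. Then the ideal Ann(f) ⊆ T = k[y₁,…,yₙ] contains a power of the ideal (y₁,…,yₙ), the apolar algebra A = T/Ann(f) is a finite-dimensional local k-algebra whose maximal ideal 𝔪 is the image of (y₁,…,yₙ), with residue field A/𝔪 = k, and the socle (0 :_A 𝔪) = {a ∈ A : a·𝔪 = 0} has k-dimension 1; that is, A is Gorenstein. -/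
/-- The ideal `(y₁,…,yₙ)` of `T = k[y₁,…,yₙ]`. -/
noncomputable def varIdeal (k : Type*) [Field k] (n : ℕ) : Ideal (MvPolynomial (Fin n) k) :=
  Ideal.span (Set.range MvPolynomial.X)

/-- The `k`-dimension of `(0 :_A J) = {a ∈ A : a·J = 0}`. -/
noncomputable def colonZeroDim (k : Type*) {A : Type*} [Field k] [CommRing A] [Algebra k A]
    (J : Ideal A) : ℕ :=
  Module.finrank k ↥((Submodule.torsionBySet A A (J : Set A)).restrictScalars k)

open MvPolynomial in
/-- The functional `D ↦ (D ∘ f)(0)`. -/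
noncomputable def apolarFun {k : Type*} [Field k] {n : ℕ} (f : MvPolynomial (Fin n) k) :
    MvPolynomial (Fin n) k →ₗ[k] k :=
  ∑ b ∈ f.support, (f.coeff b * ∏ i : Fin n, ((b i).factorial : k)) • lcoeff k b

open MvPolynomial in
lemma apolarFun_apply {k : Type*} [Field k] {n : ℕ} (f D : MvPolynomial (Fin n) k) :
    apolarFun f D =
      ∑ b ∈ f.support, (f.coeff b * ∏ i : Fin n, ((b i).factorial : k)) * D.coeff b := by
  simp [apolarFun, LinearMap.sum_apply, lcoeff]

open MvPolynomial in
lemma prod_factorial_mul_desc {k : Type*} [Field k] {n : ℕ} (a c : Fin n →₀ ℕ) :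
    (∏ i : Fin n, ((c i).factorial : k)) *
      ∏ i : Fin n, (((a + c) i).descFactorial (a i) : k) =
      ∏ i : Fin n, (((a + c) i).factorial : k) := by
  rw [← Finset.prod_mul_distrib]
  refine Finset.prod_congr rfl fun i _ => ?_
  have := Nat.factorial_mul_descFactorial (n := a i + c i) (k := a i) (by omega)
  rw [Nat.add_sub_cancel_left] at this
  rw [Finsupp.add_apply]
  rw [← Nat.cast_mul, this]

open MvPolynomial in
lemma coeff_apolar {k : Type*} [Field k] {n : ℕ} (f D : MvPolynomial (Fin n) k)
    (c : Fin n →₀ ℕ) :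
    (∏ i : Fin n, ((c i).factorial : k)) * (apolar D f).coeff c =
      apolarFun f (monomial c 1 * D) := by
  classical
  rw [apolar, Finset.sum_comm, apolarFun_apply, coeff_sum, Finset.mul_sum]
  refine Finset.sum_congr rfl fun b _ => ?_
  rw [coeff_sum, Finset.mul_sum, coeff_monomial_mul']
  simp only [coeff_monomial]
  have key : ∀ a, a + c ≠ b → (if b - a = c then coeff a D * coeff b f *
      ∏ i : Fin n, ((b i).descFactorial (a i) : k) else 0) = 0 := by
    intro a ha
    split_ifs with h
    · have : ¬ a ≤ b := by
        intro hle
        apply ha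
        rw [← h, add_tsub_cancel_of_le hle]
      rw [Finsupp.le_def] at this
      push Not at this
      obtain ⟨i, hi⟩ := this
      rw [Finset.prod_eq_zero (Finset.mem_univ i), mul_zero]
      rw [Nat.descFactorial_of_lt hi, Nat.cast_zero]
    · rfl
  split_ifs with hcb
  · obtain ⟨a, rfl⟩ := exists_add_of_le hcb
    rw [add_comm c a] at *
    rw [Finset.sum_eq_single a]
    · rw [← prod_factorial_mul_desc]
      simp only [add_tsub_cancel_left, add_tsub_cancel_right, if_true]
      ring
    · intro a' _ hne
      rw [key a' (fun h => hne (add_right_cancel h)), mul_zero]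
    · intro h
      simp [notMem_support_iff.mp h]
  · rw [mul_zero]
    refine Finset.sum_eq_zero fun a _ => ?_
    rw [key a (fun h => hcb (h ▸ le_add_self)), mul_zero]

open MvPolynomial in
/-- The ideal `Ann(f)`. -/
noncomputable def apolarIdeal {k : Type*} [Field k] {n : ℕ} (f : MvPolynomial (Fin n) k) :
    Ideal (MvPolynomial (Fin n) k) where
  carrier := {D | ∀ E, apolarFun f (E * D) = 0}
  zero_mem' := by intro E; simp
  add_mem' := by intro a b ha hb E; rw [mul_add, map_add, ha E, hb E, add_zero]
  smul_mem' := by intro c a ha E; rw [smul_eq_mul, ← mul_assoc]; exact ha _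

lemma mem_apolarIdeal {k : Type*} [Field k] {n : ℕ} {f D : MvPolynomial (Fin n) k} :
    D ∈ apolarIdeal f ↔ ∀ E, apolarFun f (E * D) = 0 := Iff.rfl

open MvPolynomial in
lemma mem_apolarIdeal_iff_monomial {k : Type*} [Field k] {n : ℕ}
    {f D : MvPolynomial (Fin n) k} :
    D ∈ apolarIdeal f ↔ ∀ c, apolarFun f (monomial c 1 * D) = 0 := by
  rw [mem_apolarIdeal]
  refine ⟨fun h c => h _, fun h E => ?_⟩
  induction E using MvPolynomial.induction_on' with
  | monomial a b =>
    rw [show monomial a b * D = b • (monomial a 1 * D) by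
      rw [← smul_mul_assoc, smul_monomial, smul_eq_mul, mul_one], map_smul, h, smul_zero]
  | add p q hp hq => rw [add_mul, map_add, hp, hq, add_zero]

open MvPolynomial in
lemma mem_apolarIdeal_iff {k : Type*} [Field k] [CharZero k] {n : ℕ}
    {f D : MvPolynomial (Fin n) k} :
    D ∈ apolarIdeal f ↔ apolar D f = 0 := by
  rw [mem_apolarIdeal_iff_monomial, MvPolynomial.ext_iff]
  refine forall_congr' fun c => ?_
  rw [← coeff_apolar, coeff_zero, mul_eq_zero, or_iff_right]
  exact Finset.prod_ne_zero_iff.mpr fun i _ => Nat.cast_ne_zero.mpr (Nat.factorial_ne_zero _)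

open MvPolynomial in
lemma pow_le_apolarIdeal {k : Type*} [Field k] {n : ℕ} (f : MvPolynomial (Fin n) k) :
    varIdeal k n ^ (f.totalDegree + 1) ≤ apolarIdeal f := by
  intro D hD E
  have h := Ideal.mul_mem_left _ E hD
  have h' := (mem_pow_idealOfVars_iff' _ _).mp h
  rw [apolarFun_apply]
  refine Finset.sum_eq_zero fun b hb => ?_
  rw [h' b, mul_zero]
  have := le_totalDegree hb
  rw [Finsupp.degree_eq_sum]
  rw [Finsupp.sum_fintype _ _ (by simp)] at this
  omega

open MvPolynomial in
lemma finite_apolar {k : Type*} [Field k] {n : ℕ} (f : MvPolynomial (Fin n) k) :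
    FiniteDimensional k (MvPolynomial (Fin n) k ⧸ apolarIdeal f) := by
  classical
  let s : Finset (Fin n →₀ ℕ) := f.support.biUnion fun b => Finset.Icc 0 b
  let Ψ : MvPolynomial (Fin n) k →ₗ[k] (s → k) :=
    LinearMap.pi fun c => apolarFun f ∘ₗ LinearMap.mulLeft k (monomial c.1 1)
  have hΨ : (apolarIdeal f).restrictScalars k = LinearMap.ker Ψ := by
    ext D
    rw [Submodule.restrictScalars_mem, mem_apolarIdeal_iff_monomial, LinearMap.mem_ker]
    constructor
    · intro h
      ext c
      exact h c.1
    · intro h c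
      by_cases hc : c ∈ s
      · exact congrFun h ⟨c, hc⟩
      · rw [apolarFun_apply]
        refine Finset.sum_eq_zero fun b hb => ?_
        rw [coeff_monomial_mul', if_neg, mul_zero]
        intro hle
        exact hc (Finset.mem_biUnion.mpr ⟨b, hb, Finset.mem_Icc.mpr ⟨zero_le, hle⟩⟩)
  have h2 : FiniteDimensional k (MvPolynomial (Fin n) k ⧸ LinearMap.ker Ψ) :=
    Module.Finite.equiv Ψ.quotKerEquivRange.symm
  rw [← hΨ] at h2
  exact Module.Finite.equiv (Submodule.Quotient.restrictScalarsEquiv k (apolarIdeal f))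

open MvPolynomial in
lemma sub_C_mem_varIdeal {k : Type*} [Field k] {n : ℕ} (D : MvPolynomial (Fin n) k) :
    D - C (D.coeff 0) ∈ varIdeal k n := by
  have := (mem_pow_idealOfVars_iff' 1 (D - C (D.coeff 0))).mpr (by
    intro x hx
    have : x = 0 := by
      rw [← Finsupp.degree_eq_zero_iff]; omega
    subst this
    simp)
  rwa [pow_one] at this

open MvPolynomial in
lemma one_notMem_varIdeal {k : Type*} [Field k] {n : ℕ} :
    (1 : MvPolynomial (Fin n) k) ∉ varIdeal k n := by
  intro h
  have h' := (mem_pow_idealOfVars_iff' 1 (1 : MvPolynomial (Fin n) k)).mp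
    (by rw [pow_one]; exact h) 0 (by simp)
  simp at h'

open MvPolynomial in
lemma varIdeal_isMaximal {k : Type*} [Field k] {n : ℕ} : (varIdeal k n).IsMaximal := by
  rw [Ideal.isMaximal_iff]
  refine ⟨one_notMem_varIdeal, fun J D hJ hD hDJ => ?_⟩
  have h1 : C (D.coeff 0) ∈ J := by
    have := J.sub_mem hDJ (hJ (sub_C_mem_varIdeal D))
    simpa using this
  have h0 : D.coeff 0 ≠ 0 := by
    intro h
    apply hD
    simpa [h] using sub_C_mem_varIdeal D
  have := J.mul_mem_left (C (D.coeff 0)⁻¹) h1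
  rwa [← C_mul, inv_mul_cancel₀ h0, C_1] at this

open MvPolynomial in
lemma apolarFun_ne_zero {k : Type*} [Field k] [CharZero k] {n : ℕ}
    {f : MvPolynomial (Fin n) k} (hf : f ≠ 0) : ∃ D, apolarFun f D ≠ 0 := by
  classical
  obtain ⟨b, hb⟩ := exists_coeff_ne_zero hf
  refine ⟨monomial b 1, ?_⟩
  rw [apolarFun_apply, Finset.sum_eq_single b]
  · rw [coeff_monomial, if_pos rfl, mul_one]
    exact mul_ne_zero hb (Finset.prod_ne_zero_iff.mpr fun i _ =>
      Nat.cast_ne_zero.mpr (Nat.factorial_ne_zero _))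
  · intro c _ hc
    rw [coeff_monomial, if_neg hc.symm, mul_zero]
  · intro h
    exact absurd (mem_support_iff.mpr hb) h

lemma eq_varIdeal_of_apolarIdeal_le {k : Type*} [Field k] {n : ℕ}
    {f : MvPolynomial (Fin n) k} {M : Ideal (MvPolynomial (Fin n) k)} (hM : M.IsMaximal)
    (h : apolarIdeal f ≤ M) : M = varIdeal k n :=
  (varIdeal_isMaximal.eq_of_le hM.ne_top
    (hM.isPrime.le_of_pow_le ((pow_le_apolarIdeal f).trans h))).symm

lemma apolarIdeal_ne_top {k : Type*} [Field k] [CharZero k] {n : ℕ}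
    {f : MvPolynomial (Fin n) k} (hf : f ≠ 0) : apolarIdeal f ≠ ⊤ := by
  intro h
  obtain ⟨D, hD⟩ := apolarFun_ne_zero hf
  have h1 : (1 : MvPolynomial (Fin n) k) ∈ apolarIdeal f := by rw [h]; trivial
  exact hD (by simpa using h1 D)

lemma apolarIdeal_le {k : Type*} [Field k] [CharZero k] {n : ℕ}
    {f : MvPolynomial (Fin n) k} (hf : f ≠ 0) : apolarIdeal f ≤ varIdeal k n := by
  obtain ⟨M, hM, hle⟩ := Ideal.exists_le_maximal _ (apolarIdeal_ne_top hf)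
  rwa [← eq_varIdeal_of_apolarIdeal_le hM hle]

open MvPolynomial in
lemma mem_apolarIdeal_of_socle {k : Type*} [Field k] {n : ℕ}
    {f D : MvPolynomial (Fin n) k} (h : ∀ E ∈ varIdeal k n, E * D ∈ apolarIdeal f)
    (h0 : apolarFun f D = 0) : D ∈ apolarIdeal f := by
  intro E
  have h1 := h _ (sub_C_mem_varIdeal E) 1
  rw [one_mul, sub_mul, map_sub, ← smul_eq_C_mul, map_smul, h0, smul_zero, sub_zero] at h1
  exact h1

lemma exists_socle {k : Type*} [Field k] [CharZero k] {n : ℕ}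
    {f : MvPolynomial (Fin n) k} (hf : f ≠ 0) :
    ∃ D ∉ apolarIdeal f, ∀ E ∈ varIdeal k n, E * D ∈ apolarIdeal f := by
  classical
  have hex : ∃ N, varIdeal k n ^ N ≤ apolarIdeal f := ⟨_, pow_le_apolarIdeal f⟩
  have hspec := Nat.find_spec hex
  have hmin := fun m => Nat.find_min (H := hex) (m := m)
  cases hN : Nat.find hex with
  | zero =>
    rw [hN, pow_zero, Ideal.one_eq_top, top_le_iff] at hspec
    exact absurd hspec (apolarIdeal_ne_top hf)
  | succ m =>
    have := hmin m (by omega)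
    obtain ⟨D, hD, hD'⟩ := SetLike.not_le_iff_exists.mp this
    refine ⟨D, hD', fun E hE => hspec ?_⟩
    rw [hN, pow_succ']
    exact Ideal.mul_mem_mul hE hD

lemma colonZeroDim_apolar {k : Type*} [Field k] [CharZero k] {n : ℕ}
    {f : MvPolynomial (Fin n) k} (hf : f ≠ 0) :
    colonZeroDim k (Ideal.map (Ideal.Quotient.mk (apolarIdeal f)) (varIdeal k n)) = 1 := by
  have hmem : ∀ D : MvPolynomial (Fin n) k, Ideal.Quotient.mk (apolarIdeal f) D ∈
      (Submodule.torsionBySet (MvPolynomial (Fin n) k ⧸ apolarIdeal f) _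
        (Ideal.map (Ideal.Quotient.mk (apolarIdeal f)) (varIdeal k n) : Set _)).restrictScalars k
      ↔ ∀ E ∈ varIdeal k n, E * D ∈ apolarIdeal f := by
    intro D
    rw [Submodule.restrictScalars_mem, Submodule.mem_torsionBySet_iff]
    constructor
    · intro h E hE
      have := h ⟨_, Ideal.mem_map_of_mem _ hE⟩
      rwa [smul_eq_mul, ← map_mul, Ideal.Quotient.eq_zero_iff_mem] at this
    · rintro h ⟨a, ha⟩
      obtain ⟨E, hE, rfl⟩ := (Ideal.mem_map_iff_of_surjective _
        Ideal.Quotient.mk_surjective).mp ha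
      change Ideal.Quotient.mk _ E * Ideal.Quotient.mk _ D = 0
      rw [← map_mul, Ideal.Quotient.eq_zero_iff_mem]
      exact h E hE
  obtain ⟨D, hD, hs⟩ := exists_socle hf
  have hφ : apolarFun f D ≠ 0 := fun h => hD (mem_apolarIdeal_of_socle hs h)
  rw [colonZeroDim, finrank_eq_one_iff']
  refine ⟨⟨_, (hmem D).mpr hs⟩, ?_, ?_⟩
  · intro h
    exact hD (Ideal.Quotient.eq_zero_iff_mem.mp (congrArg Subtype.val h))
  · rintro ⟨w, hw⟩
    obtain ⟨W, rfl⟩ := Ideal.Quotient.mk_surjective w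
    have hW := (hmem W).mp hw
    refine ⟨apolarFun f W / apolarFun f D, Subtype.ext ?_⟩
    change Ideal.Quotient.mk _ ((apolarFun f W / apolarFun f D) • D) = Ideal.Quotient.mk _ W
    rw [Ideal.Quotient.eq]
    refine mem_apolarIdeal_of_socle (fun E hE => ?_) ?_
    · rw [mul_sub, mul_smul_comm, MvPolynomial.smul_eq_C_mul]
      exact Ideal.sub_mem _ (Ideal.mul_mem_left _ _ (hs E hE)) (hW E hE)
    · rw [map_sub, map_smul, smul_eq_mul, div_mul_cancel₀ _ hφ, sub_self]

/-- Let `k` be a field of characteristic zero and `f ∈ k[x₁,…,xₙ]` a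
nonzero polynomial. Then `Ann(f) = {∂ ∈ T : ∂ ∘ f = 0}` is an ideal of `T = k[y₁,…,yₙ]`
containing a power of `(y₁,…,yₙ)`, and the apolar algebra `A = T/Ann(f)` is a
finite-dimensional local `k`-algebra whose unique maximal ideal `𝔪` is the image of
`(y₁,…,yₙ)`, with residue field `A/𝔪 = k`, and whose socle `(0 :_A 𝔪)` has
`k`-dimension `1`; that is, `A` is Gorenstein. -/
theorem deformations_stmt8 {k : Type*} [Field k] [CharZero k] {n : ℕ}
    (f : MvPolynomial (Fin n) k) (hf : f ≠ 0) :
    ∃ I : Ideal (MvPolynomial (Fin n) k),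
      -- I is the apolar ideal Ann(f)
      (I : Set (MvPolynomial (Fin n) k)) = {D | apolar D f = 0} ∧
      -- Ann(f) contains a power of (y₁,…,yₙ)
      (∃ N : ℕ, (varIdeal k n) ^ N ≤ I) ∧
      -- the apolar algebra is finite-dimensional over k
      FiniteDimensional k (MvPolynomial (Fin n) k ⧸ I) ∧
      -- it is local with maximal ideal 𝔪 the image of (y₁,…,yₙ):
      -- that image is a maximal ideal, and is the unique one
      (Ideal.map (Ideal.Quotient.mk I) (varIdeal k n)).IsMaximal ∧
      (∀ J : Ideal (MvPolynomial (Fin n) k ⧸ I), J.IsMaximal →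
        J = Ideal.map (Ideal.Quotient.mk I) (varIdeal k n)) ∧
      -- the residue field A/𝔪 is k
      Function.Bijective (algebraMap k
        ((MvPolynomial (Fin n) k ⧸ I) ⧸ Ideal.map (Ideal.Quotient.mk I) (varIdeal k n))) ∧
      -- and the socle (0 :_A 𝔪) has k-dimension 1, i.e. the apolar algebra is Gorenstein
      colonZeroDim k (Ideal.map (Ideal.Quotient.mk I) (varIdeal k n)) = 1 := by
  have hmax := varIdeal_isMaximal (k := k) (n := n)
  have hcomap : Ideal.comap (Ideal.Quotient.mk (apolarIdeal f))
      (Ideal.map (Ideal.Quotient.mk (apolarIdeal f)) (varIdeal k n)) = varIdeal k n := by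
    rw [Ideal.comap_map_of_surjective _ Ideal.Quotient.mk_surjective,
      ← RingHom.ker_eq_comap_bot, Ideal.mk_ker, sup_eq_left]
    exact apolarIdeal_le hf
  have hmaxA : (Ideal.map (Ideal.Quotient.mk (apolarIdeal f)) (varIdeal k n)).IsMaximal := by
    refine (Ideal.map_eq_top_or_isMaximal_of_surjective _ Ideal.Quotient.mk_surjective
      hmax).resolve_left fun h => ?_
    rw [h, Ideal.comap_top] at hcomap
    exact hmax.ne_top hcomap.symm
  refine ⟨apolarIdeal f, ?_, ⟨_, pow_le_apolarIdeal f⟩, finite_apolar f, hmaxA, ?_, ⟨?_, ?_⟩,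
    colonZeroDim_apolar hf⟩
  · ext D
    exact mem_apolarIdeal_iff
  · intro J hJ
    have h1 := Ideal.comap_isMaximal_of_surjective (Ideal.Quotient.mk (apolarIdeal f))
      Ideal.Quotient.mk_surjective (K := J)
    have h2 : Ideal.comap (Ideal.Quotient.mk (apolarIdeal f)) J = varIdeal k n := by
      refine eq_varIdeal_of_apolarIdeal_le (f := f) h1 fun D hD => ?_
      rw [Ideal.mem_comap, Ideal.Quotient.eq_zero_iff_mem.mpr hD]
      exact J.zero_mem
    rw [← h2, Ideal.map_comap_of_surjective _ Ideal.Quotient.mk_surjective]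
  · have := Ideal.Quotient.nontrivial_iff.mpr hmaxA.ne_top
    exact (algebraMap k _).injective
  · intro x
    obtain ⟨y, rfl⟩ := Ideal.Quotient.mk_surjective x
    obtain ⟨D, rfl⟩ := Ideal.Quotient.mk_surjective y
    refine ⟨D.coeff 0, ?_⟩
    symm
    change Ideal.Quotient.mk _ (Ideal.Quotient.mk _ D) =
      Ideal.Quotient.mk _ (Ideal.Quotient.mk _ (MvPolynomial.C (D.coeff 0)))
    rw [Ideal.Quotient.eq, ← map_sub]
    exact Ideal.mem_map_of_mem _ (sub_C_mem_varIdeal D)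
end

section
/- Let k be a field of characteristic zero and (A, 𝔪) a finite-dimensional local k-algebra with residue field A/𝔪 = k whose socle soc(A) = {a ∈ A : a·𝔪 = 0} has k-dimension 1 (i.e. A is a finite local Gorenstein k-algebra). Then there exist n ≥ 0 and a polynomial f ∈ k[x₁,…,xₙ] such that A is isomorphic as a k-algebra to the apolar algebra k[y₁,…,yₙ]/Ann(f). -/
open MvPolynomial in
theorem coeff_apolar_aux {k : Type*} [Field k] {n : ℕ}
    (D f : MvPolynomial (Fin n) k) (c : Fin n →₀ ℕ) :
    (apolar D f).coeff c = ∑ a ∈ D.support, D.coeff a * f.coeff (a + c) *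
      ∏ i : Fin n, (((a + c) i).descFactorial (a i) : k) := by
  classical
  unfold apolar
  rw [coeff_sum]
  refine Finset.sum_congr rfl fun a _ => ?_
  rw [coeff_sum]
  rw [Finset.sum_eq_single (a + c)]
  · rw [coeff_monomial, if_pos (by simp)]
  · intro b _ hb
    rw [coeff_monomial]
    split_ifs with h
    · have : ∃ i, b i < a i := by
        by_contra hcon
        push Not at hcon
        apply hb
        rw [← h]
        ext i
        have := hcon i
        simp only [Finsupp.add_apply, Finsupp.tsub_apply]
        omega
      obtain ⟨i, hi⟩ := this
      rw [Finset.prod_eq_zero (Finset.mem_univ i), mul_zero]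
      rw [Nat.descFactorial_of_lt hi, Nat.cast_zero]
    · rfl
  · intro h
    rw [notMem_support_iff.mp h]
    simp

open MvPolynomial in
theorem apolar_key_aux {k A : Type*} [Field k] [CharZero k] [CommRing A] [Algebra k A] {n N : ℕ}
    (v : Fin n → A) (hv : ∀ i, v i ^ N = 0) (l : A →ₗ[k] k) :
    ∃ f : MvPolynomial (Fin n) k, ∀ D, apolar D f = 0 ↔
      ∀ E : MvPolynomial (Fin n) k, l (aeval v D * aeval v E) = 0 := by
  classical
  let g : (Fin n →₀ ℕ) → k := fun b => l (aeval v (monomial b (1 : k))) / ∏ i, ((b i).factorial : k)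
  let f : MvPolynomial (Fin n) k :=
    ∑ b ∈ Finset.Iic (Finsupp.equivFunOnFinite.symm (fun _ : Fin n => N)), monomial b (g b)
  have hf : ∀ b, f.coeff b = g b := by
    intro b
    simp only [f, coeff_sum, coeff_monomial]
    rw [Finset.sum_ite_eq']
    split_ifs with h
    · rfl
    · have : ∃ i, N < b i := by
        by_contra hcon
        push Not at hcon
        exact h (Finset.mem_Iic.mpr fun i => by simpa using hcon i)
      obtain ⟨i, hi⟩ := this
      have h0 : aeval v (monomial b (1 : k)) = 0 := by
        rw [aeval_monomial, Finsupp.prod_fintype _ _ (by simp),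
          Finset.prod_eq_zero (Finset.mem_univ i), mul_zero]
        exact pow_eq_zero_of_le hi.le (hv i)
      simp [g, h0]
  have hc : ∀ D c, (apolar D f).coeff c * ∏ i, ((c i).factorial : k) =
      l (aeval v D * aeval v (monomial c (1 : k))) := by
    intro D c
    rw [coeff_apolar_aux, Finset.sum_mul]
    conv_rhs => rw [D.as_sum, map_sum, Finset.sum_mul, map_sum]
    refine Finset.sum_congr rfl fun a _ => ?_
    have e1 : aeval v (monomial a (D.coeff a)) * aeval v (monomial c (1 : k)) =
        D.coeff a • aeval v (monomial (a + c) (1 : k)) := by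
      rw [← map_mul, monomial_mul, ← map_smul, smul_monomial]
      simp
    rw [e1, map_smul, hf, smul_eq_mul, mul_assoc, mul_assoc, ← Finset.prod_mul_distrib]
    congr 1
    have e2 : ∏ i, ((((a + c) i).descFactorial (a i) : k) * ((c i).factorial : k)) =
        ∏ i, (((a + c) i).factorial : k) := by
      refine Finset.prod_congr rfl fun i _ => ?_
      have := Nat.factorial_mul_descFactorial (n := (a + c) i) (k := a i) (by simp)
      rw [← this]
      simp [mul_comm]
    rw [e2]
    refine div_mul_cancel₀ _ ?_
    exact Finset.prod_ne_zero_iff.mpr fun i _ => Nat.cast_ne_zero.mpr (Nat.factorial_ne_zero _)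
  refine ⟨f, fun D => ⟨fun h E => ?_, fun h => ?_⟩⟩
  · induction E using MvPolynomial.induction_on' with
    | monomial c r =>
      have := hc D c
      rw [h, coeff_zero, zero_mul] at this
      have e : monomial c r = r • monomial c (1 : k) := by rw [smul_monomial]; simp
      rw [e, map_smul, mul_smul_comm, map_smul, ← this, smul_zero]
    | add p q hp hq => rw [map_add, mul_add, map_add, hp, hq, add_zero]
  · ext c
    have := hc D c
    rw [h] at this
    rw [coeff_zero]
    refine (mul_eq_zero.mp this).resolve_right ?_
    exact Finset.prod_ne_zero_iff.mpr fun i _ => Nat.cast_ne_zero.mpr (Nat.factorial_ne_zero _)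

theorem socle_meet_aux {A : Type*} [CommRing A] (m : Ideal A) (hm : IsNilpotent m)
    (x : A) (hx : x ≠ 0) : ∃ y, x * y ≠ 0 ∧ ∀ z ∈ m, z * (x * y) = 0 := by
  classical
  have hex : ∃ j, ∀ y ∈ m ^ j, x * y = 0 := by
    obtain ⟨N, hN⟩ := hm
    refine ⟨N, fun y hy => ?_⟩
    rw [hN] at hy
    rw [(Submodule.mem_bot A).mp hy, mul_zero]
  have h1 := Nat.find_spec hex
  rcases hj : Nat.find hex with _ | j
  · rw [hj] at h1
    exact absurd (by simpa using h1 1 (by simp)) hx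
  · have h2 := Nat.find_min hex (m := j) (by omega)
    push Not at h2
    obtain ⟨y, hy, hxy⟩ := h2
    refine ⟨y, hxy, fun z hz => ?_⟩
    rw [hj] at h1
    have := h1 (y * z) (by rw [pow_succ]; exact Ideal.mul_mem_mul hy hz)
    linear_combination this

/-- Let `k` be a field of characteristic zero and `(A, 𝔪)` a
finite-dimensional local `k`-algebra with residue field `A/𝔪 = k` whose socle
`soc(A) = {a ∈ A : a·𝔪 = 0}` has `k`-dimension `1` (a finite local Gorenstein
`k`-algebra). Then there exist `n ≥ 0` and a polynomial `f ∈ k[x₁,…,xₙ]` such that `A` is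
isomorphic as a `k`-algebra to the apolar algebra `k[y₁,…,yₙ]/Ann(f)`. -/
theorem deformations_stmt9 {k A : Type*} [Field k] [CharZero k]
    [CommRing A] [Algebra k A] [IsLocalRing A] [FiniteDimensional k A]
    -- the residue field A/𝔪 is k
    (hres : Function.Bijective (algebraMap k (IsLocalRing.ResidueField A)))
    -- the socle has k-dimension 1
    (hsoc : Module.finrank k
      ↥((Submodule.torsionBySet A A
          ((IsLocalRing.maximalIdeal A : Ideal A) : Set A)).restrictScalars k) = 1) :
    ∃ (n : ℕ) (f : MvPolynomial (Fin n) k) (I : Ideal (MvPolynomial (Fin n) k)),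
      (I : Set (MvPolynomial (Fin n) k)) = {D | apolar D f = 0} ∧
      Nonempty ((MvPolynomial (Fin n) k ⧸ I) ≃ₐ[k] A) := by

  classical
  have hart : IsArtinianRing A := IsArtinianRing.of_finite k A
  have hnil : IsNilpotent (IsLocalRing.maximalIdeal A) := by
    rw [← IsLocalRing.jacobson_eq_maximalIdeal ⊥ bot_ne_top]
    exact IsArtinianRing.isNilpotent_jacobson_bot
  obtain ⟨N, hN⟩ := hnil
  let M : Submodule k A := (IsLocalRing.maximalIdeal A).restrictScalars k
  let b := Module.finBasis k M
  let v : Fin (Module.finrank k M) → A := fun i => (b i : A)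
  have hv : ∀ i, v i ^ N = 0 := fun i => by
    have h : v i ^ N ∈ (IsLocalRing.maximalIdeal A) ^ N := Ideal.pow_mem_pow (b i).2 N
    rw [hN] at h
    exact (Submodule.mem_bot A).mp h
  have hM : ∀ x ∈ M, x ∈ (MvPolynomial.aeval (R := k) v).range := by
    intro x hx
    have := b.sum_repr ⟨x, hx⟩
    have h2 := congrArg (Subtype.val) this
    simp only [Submodule.coe_sum, Submodule.coe_smul] at h2
    rw [← h2]
    refine Subalgebra.sum_mem _ fun i _ => Subalgebra.smul_mem _ ?_ _
    exact ⟨MvPolynomial.X i, by simp [v]⟩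
  have hsurj : Function.Surjective (MvPolynomial.aeval (R := k) v) := by
    intro x
    obtain ⟨r, hr⟩ := hres.2 (IsLocalRing.residue A x)
    have h1 : x - algebraMap k A r ∈ IsLocalRing.maximalIdeal A := by
      rw [← IsLocalRing.residue_eq_zero_iff, map_sub, ← hr, sub_eq_zero]
      rfl
    have h2 := Subalgebra.add_mem _ (hM _ h1)
      (Subalgebra.algebraMap_mem (MvPolynomial.aeval (R := k) v).range r)
    rw [sub_add_cancel] at h2
    exact h2
  obtain ⟨s, hs0, hs⟩ := finrank_eq_one_iff'.mp hsoc
  obtain ⟨l, hl⟩ := Module.Projective.exists_dual_ne_zero k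
    (x := (s : A)) (fun h => hs0 (Subtype.ext h))
  obtain ⟨f, hf⟩ := apolar_key_aux v hv l
  refine ⟨_, f, RingHom.ker (MvPolynomial.aeval (R := k) v), ?_,
    ⟨Ideal.quotientKerAlgEquivOfSurjective hsurj⟩⟩
  ext D
  simp only [SetLike.mem_coe, RingHom.mem_ker, Set.mem_ofPred_eq]
  rw [hf]
  constructor
  · intro h E
    rw [h, zero_mul, map_zero]
  · intro h
    by_contra hne
    obtain ⟨y, hy, hz⟩ := socle_meet_aux _ ⟨N, hN⟩ _ hne
    obtain ⟨E, rfl⟩ := hsurj y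
    obtain ⟨c, hc⟩ := hs ⟨_, (Submodule.mem_torsionBySet_iff _ _).mpr fun z => hz z.1 z.2⟩
    have hc' := congrArg Subtype.val hc
    simp only [Submodule.coe_smul] at hc'
    have := h E
    rw [← hc', map_smul, smul_eq_mul] at this
    rcases mul_eq_zero.mp this with h0 | h0
    · rw [h0, zero_smul] at hc'
      exact hy hc'.symm
    · exact hl h0
end

section
/- Let (A, 𝔪) be a finite local Gorenstein k-algebra and let π : A → k be a k-linear map whose restriction to the socle soc(A) is nonzero. Then the bilinear form A × A → k given by (a, b) ↦ π(a·b) is a perfect (nondegenerate) pairing: for every nonzero a ∈ A there exists b ∈ A with π(a·b) ≠ 0. -/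
/-- Let `(A, 𝔪)` be a finite local Gorenstein `k`-algebra and
`π : A → k` a `k`-linear map whose restriction to the socle `soc(A)` is nonzero. Then the
bilinear form `(a, b) ↦ π(a·b)` is a perfect pairing: for every nonzero `a ∈ A` there
exists `b ∈ A` with `π(a·b) ≠ 0`. -/
theorem deformations_stmt10 {k A : Type*} [Field k]
    [CommRing A] [Algebra k A] [IsLocalRing A] [FiniteDimensional k A]
    -- the residue field A/𝔪 is k
    (hres : Function.Bijective (algebraMap k (IsLocalRing.ResidueField A)))
    -- the socle soc(A) = {a : a·𝔪 = 0} has k-dimension 1 (A is Gorenstein)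
    (hsoc : Module.finrank k
      ↥((Submodule.torsionBySet A A
          ((IsLocalRing.maximalIdeal A : Ideal A) : Set A)).restrictScalars k) = 1)
    (π : A →ₗ[k] k)
    -- the restriction of π to the socle is nonzero
    (hπ : ∃ a : A, (∀ b ∈ IsLocalRing.maximalIdeal A, b * a = 0) ∧ π a ≠ 0) :
    ∀ a : A, a ≠ 0 → ∃ b : A, π (a * b) ≠ 0 := by
  intro a ha
  classical
  haveI : IsArtinianRing A := IsArtinianRing.of_finite k A
  obtain ⟨N, hN⟩ : IsNilpotent (IsLocalRing.maximalIdeal A) := by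
    rw [← IsLocalRing.jacobson_eq_maximalIdeal (⊥ : Ideal A) bot_ne_top]
    exact IsArtinianRing.isNilpotent_jacobson_bot
  have hex : ∃ n : ℕ, ∀ x ∈ (IsLocalRing.maximalIdeal A) ^ n, x * a = 0 := by
    refine ⟨N, fun x hx => ?_⟩
    rw [hN] at hx
    have hx0 : x = 0 := by simpa using hx
    rw [hx0, zero_mul]
  have hspec := Nat.find_spec hex
  have hmin := fun m => Nat.find_min hex (m := m)
  generalize Nat.find hex = n at hspec hmin
  obtain _ | n := n
  · exact absurd (by simpa using hspec 1 (by simp)) ha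
  have h := hmin n (Nat.lt_succ_self n)
  push Not at h
  obtain ⟨y, hy, hya⟩ := h
  obtain ⟨s, hs, hπs⟩ := hπ
  have hs' : s ∈ (Submodule.torsionBySet A A
      ((IsLocalRing.maximalIdeal A : Ideal A) : Set A)).restrictScalars k := by
    rw [Submodule.restrictScalars_mem, Submodule.mem_torsionBySet_iff]
    rintro ⟨b, hb⟩
    exact hs b hb
  have ht' : y * a ∈ (Submodule.torsionBySet A A
      ((IsLocalRing.maximalIdeal A : Ideal A) : Set A)).restrictScalars k := by
    rw [Submodule.restrictScalars_mem, Submodule.mem_torsionBySet_iff]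
    rintro ⟨b, hb⟩
    have hyb : y * b ∈ (IsLocalRing.maximalIdeal A) ^ (n + 1) := by
      rw [pow_succ]
      exact Ideal.mul_mem_mul hy hb
    have h0 := hspec _ hyb
    change b * (y * a) = 0
    rw [← h0]
    ring
  obtain ⟨c, hc⟩ := exists_smul_eq_of_finrank_eq_one hsoc
    (x := ⟨y * a, ht'⟩) (fun h => hya (congrArg Subtype.val h)) ⟨s, hs'⟩
  have hc' : c • (y * a) = s := congrArg Subtype.val hc
  refine ⟨y, fun h0 => hπs ?_⟩
  rw [← hc', map_smul, mul_comm y a, h0, smul_zero]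
end

section
/- Let (A, 𝔪) be a finite local Gorenstein k-algebra. Then for every m ≥ 0, dim_k 𝔪^m/𝔪^{m+1} = dim_k (0 :_A 𝔪^{m+1})/(0 :_A 𝔪^m); that is, the local Hilbert function of A satisfies h_A(m) = dim_k ann(𝔪^{m+1})/ann(𝔪^m), where ann(I) = {a ∈ A : a·I = 0}. -/
/-- `dim_k P/(P ∩ Q)`, the `k`-dimension of the image of the submodule `P` in `A/Q`. -/
noncomputable def subquotDim (k : Type*) {A : Type*} [Field k] [CommRing A] [Algebra k A]
    (P Q : Submodule A A) : ℕ :=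
  Module.finrank k (↥(P.restrictScalars k) ⧸
    (Submodule.comap (P.restrictScalars k).subtype (Q.restrictScalars k)))

/-- Iarrobino's `A_{m,n} = J^m ∩ (0 : J^n)`, with the convention `J^i = A` for `i ≤ 0`. -/
noncomputable def iaA {A : Type*} [CommRing A] (J : Ideal A) (m : ℕ) (n : ℤ) : Ideal A :=
  J ^ m ⊓ Submodule.torsionBySet A A ((J ^ n.toNat : Ideal A) : Set A)

/-- `dim_k Q_{m,n}` where `Q_{m,n} = A_{m,n}/(A_{m+1,n} + A_{m,n-1})`. -/
noncomputable def iaQdim (k : Type*) {A : Type*} [Field k] [CommRing A] [Algebra k A]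
    (J : Ideal A) (m : ℕ) (n : ℤ) : ℕ :=
  subquotDim k (iaA J m n) (iaA J (m + 1) n ⊔ iaA J m (n - 1))

/-- The Hilbert function decomposition `Δ_s(t) = dim_k Q_{t, j+1-(s+t)}` for `0 ≤ s ≤ j`,
`0 ≤ t ≤ j - s`, and `Δ_s(t) = 0` otherwise. -/
noncomputable def iaDelta (k : Type*) {A : Type*} [Field k] [CommRing A] [Algebra k A]
    (J : Ideal A) (j s t : ℕ) : ℕ :=
  if s ≤ j ∧ s + t ≤ j then iaQdim k J t ((j : ℤ) + 1 - (s + t)) else 0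

/-- The local Hilbert function `h(t) = dim_k J^t/J^(t+1)`. -/
noncomputable def hilbFn (k : Type*) {A : Type*} [Field k] [CommRing A] [Algebra k A]
    (J : Ideal A) (t : ℕ) : ℕ :=
  subquotDim k (J ^ t) (J ^ (t + 1))

theorem subquotDim_add {k A : Type*} [Field k] [CommRing A] [Algebra k A]
    [FiniteDimensional k A] {P Q : Submodule A A} (h : Q ≤ P) :
    subquotDim k P Q + Module.finrank k (Q.restrictScalars k) =
      Module.finrank k (P.restrictScalars k) := by
  have h' : Q.restrictScalars k ≤ P.restrictScalars k := h
  have e := (Submodule.comapSubtypeEquivOfLe h').finrank_eq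
  have := Submodule.finrank_quotient_add_finrank
    (Submodule.comap (P.restrictScalars k).subtype (Q.restrictScalars k))
  unfold subquotDim
  rw [← e]
  exact this

/-- In an Artinian local ring, every nonzero element has a nonzero multiple in the socle. -/
theorem exists_mul_mem_socle {A : Type*} [CommRing A] [IsLocalRing A] [IsArtinianRing A]
    (x : A) (hx : x ≠ 0) :
    ∃ b : A, x * b ≠ 0 ∧ ∀ c ∈ IsLocalRing.maximalIdeal A, c * (x * b) = 0 := by
  classical
  obtain ⟨n, hn⟩ := IsArtinianRing.isNilpotent_jacobson_bot (R := A)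
  rw [IsLocalRing.jacobson_eq_maximalIdeal _ bot_ne_top] at hn
  have hex : ∃ n : ℕ, ∀ b ∈ IsLocalRing.maximalIdeal A ^ n, x * b = 0 := by
    refine ⟨n, fun b hb => ?_⟩
    rw [hn] at hb
    have : b = 0 := by simpa using hb
    simp [this]
  have hspec := Nat.find_spec hex
  have hmin := fun m => Nat.find_min hex (m := m)
  cases hN : Nat.find hex with
  | zero =>
    rw [hN] at hspec
    exact absurd (by simpa using hspec 1 (by simp)) hx
  | succ N =>
    rw [hN] at hspec
    have := hmin N (by omega)
    push Not at this
    obtain ⟨b, hb, hxb⟩ := this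
    refine ⟨b, hxb, fun c hc => ?_⟩
    have := hspec (b * c) (by rw [pow_succ]; exact Ideal.mul_mem_mul hb hc)
    rw [← this]; ring

theorem finrank_ann {k A : Type*} [Field k]
    [CommRing A] [Algebra k A] [IsLocalRing A] [FiniteDimensional k A]
    (hsoc : Module.finrank k
      ↥((Submodule.torsionBySet A A
          ((IsLocalRing.maximalIdeal A : Ideal A) : Set A)).restrictScalars k) = 1)
    (I : Ideal A) :
    Module.finrank k (Submodule.restrictScalars k I) +
      Module.finrank k ((Submodule.torsionBySet A A (I : Set A)).restrictScalars k) =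
      Module.finrank k A := by
  have : IsArtinianRing A := IsArtinianRing.of_finite k A
  obtain ⟨⟨s, hs⟩, hs0, hspan⟩ := finrank_eq_one_iff'.1 hsoc
  have hs0' : s ≠ 0 := fun h => hs0 (by simp [h])
  obtain ⟨φ, hφ⟩ : ∃ φ : Module.Dual k A, φ s ≠ 0 := by
    by_contra! h
    exact hs0' ((Module.forall_dual_apply_eq_zero_iff k s).1 h)
  -- `φ` detects nonzero elements
  have key : ∀ x : A, x ≠ 0 → ∃ b, φ (x * b) ≠ 0 := by
    intro x hx
    obtain ⟨b, hb, hann⟩ := exists_mul_mem_socle x hx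
    refine ⟨b, ?_⟩
    have hmem : x * b ∈ (Submodule.torsionBySet A A
          ((IsLocalRing.maximalIdeal A : Ideal A) : Set A)).restrictScalars k := by
      rw [Submodule.restrictScalars_mem, Submodule.mem_torsionBySet_iff]
      rintro ⟨c, hc⟩
      exact hann c hc
    obtain ⟨c, hc⟩ := hspan ⟨x * b, hmem⟩
    have hc' : c • s = x * b := congrArg Subtype.val hc
    rw [← hc', map_smul, smul_eq_mul]
    refine mul_ne_zero ?_ hφ
    rintro rfl
    exact hb (by rw [← hc', zero_smul])
  let B : A →ₗ[k] Module.Dual k A := (LinearMap.mul k A).compr₂ φ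
  have hB : ∀ x y, B x y = φ (x * y) := fun x y => rfl
  have hinj : Function.Injective B := by
    rw [injective_iff_map_eq_zero]
    intro x hx
    by_contra hne
    obtain ⟨b, hb⟩ := key x hne
    exact hb (by rw [← hB, hx]; rfl)
  let e : A ≃ₗ[k] Module.Dual k A :=
    LinearEquiv.ofInjectiveOfFinrankEq B hinj Subspace.dual_finrank_eq.symm
  have he : ∀ x y, e x y = φ (x * y) := fun x y => rfl
  have hcomap : ((Submodule.torsionBySet A A (I : Set A)).restrictScalars k).map e.toLinearMap =
      (Submodule.restrictScalars k I).dualAnnihilator := by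
    ext f
    obtain ⟨x, rfl⟩ := e.surjective f
    rw [Submodule.mem_dualAnnihilator]
    constructor
    · rintro ⟨y, hy, hyx⟩ w hw
      obtain rfl := e.injective hyx
      have : w * y = 0 := (Submodule.mem_torsionBySet_iff _ _).1 hy ⟨w, hw⟩
      rw [he, mul_comm, this, map_zero]
    · intro h
      refine ⟨x, ?_, rfl⟩
      change x ∈ Submodule.torsionBySet A A (I : Set A)
      rw [Submodule.mem_torsionBySet_iff]
      rintro ⟨w, hw⟩
      by_contra hne
      obtain ⟨b, hb⟩ := key _ hne
      refine hb ?_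
      have := h (w * b) (I.mul_mem_right b hw)
      rw [he] at this
      rw [← this]
      congr 1
      simp only [smul_eq_mul]
      ring
  have h1 := Subspace.finrank_add_finrank_dualAnnihilator_eq (Submodule.restrictScalars k I)
  rw [← hcomap] at h1
  rw [← h1, LinearEquiv.finrank_map_eq e]

/-- Let `(A, 𝔪)` be a finite local Gorenstein `k`-algebra. Then for
every `m ≥ 0`, `dim_k 𝔪^m/𝔪^(m+1) = dim_k (0 :_A 𝔪^(m+1))/(0 :_A 𝔪^m)`; that is, the
local Hilbert function satisfies `h_A(m) = dim_k ann(𝔪^(m+1))/ann(𝔪^m)`. -/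
theorem deformations_stmt11 {k A : Type*} [Field k]
    [CommRing A] [Algebra k A] [IsLocalRing A] [FiniteDimensional k A]
    -- the residue field A/𝔪 is k
    (hres : Function.Bijective (algebraMap k (IsLocalRing.ResidueField A)))
    -- the socle soc(A) has k-dimension 1 (A is Gorenstein)
    (hsoc : Module.finrank k
      ↥((Submodule.torsionBySet A A
          ((IsLocalRing.maximalIdeal A : Ideal A) : Set A)).restrictScalars k) = 1) :
    ∀ m : ℕ,
      hilbFn k (IsLocalRing.maximalIdeal A) m =
        subquotDim k
          (Submodule.torsionBySet A A ((IsLocalRing.maximalIdeal A ^ (m + 1) : Ideal A) : Set A))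
          (Submodule.torsionBySet A A ((IsLocalRing.maximalIdeal A ^ m : Ideal A) : Set A)) := by
  intro m
  have hle : IsLocalRing.maximalIdeal A ^ (m + 1) ≤ IsLocalRing.maximalIdeal A ^ m :=
    Ideal.pow_le_pow_right (Nat.le_succ m)
  have h1 := subquotDim_add (k := k) hle
  have h2 := subquotDim_add (k := k)
    (Submodule.torsionBySet_le_torsionBySet_of_subset (R := A) (M := A)
      (SetLike.coe_subset_coe.2 hle))
  have h3 := finrank_ann hsoc (IsLocalRing.maximalIdeal A ^ m)
  have h4 := finrank_ann hsoc (IsLocalRing.maximalIdeal A ^ (m + 1))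
  unfold hilbFn
  omega
end

section
/- Iarrobino symmetry: let (A, 𝔪) be a finite local Gorenstein k-algebra of socle degree j. Then for all m ≥ 0 and n ≥ 1, dim_k Q_{m,n} = dim_k Q_{n−1,m+1}; equivalently, the rows of the Hilbert function decomposition satisfy Δ_s(t) = Δ_s((j−s)−t) for all s and t, i.e. each Δ_s is symmetric about (j−s)/2. -/
/-- dimension of an ideal -/
noncomputable def idim (k : Type*) {A : Type*} [Field k] [CommRing A] [Algebra k A]
    (P : Submodule A A) : ℕ := Module.finrank k ↥(P.restrictScalars k)

section helpers
variable {k A : Type*} [Field k] [CommRing A] [Algebra k A] [FiniteDimensional k A]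

theorem subquot_add (P Q : Submodule A A) (h : Q ≤ P) :
    subquotDim k P Q + idim k Q = idim k P := by
  unfold subquotDim idim
  have h1 := Submodule.finrank_quotient_add_finrank
    (Submodule.comap (P.restrictScalars k).subtype (Q.restrictScalars k))
  have h2 := (Submodule.comapSubtypeEquivOfLe
    (show Q.restrictScalars k ≤ P.restrictScalars k from h)).finrank_eq
  rw [h2] at h1
  exact h1

theorem idim_sup_inf (P Q : Submodule A A) :
    idim k (P ⊔ Q) + idim k (P ⊓ Q) = idim k P + idim k Q := by
  have := Submodule.finrank_sup_add_finrank_inf_eq (P.restrictScalars k) (Q.restrictScalars k)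
  unfold idim
  rw [Submodule.restrictScalars_sup, Submodule.restrictScalars_inf]
  exact this

theorem ann_anti (J : Ideal A) {a b : ℕ} (h : a ≤ b) :
    Submodule.torsionBySet A A ((J ^ a : Ideal A) : Set A) ≤
      Submodule.torsionBySet A A ((J ^ b : Ideal A) : Set A) :=
  Submodule.torsionBySet_le_torsionBySet_of_subset (Ideal.pow_le_pow_right h)

theorem iaQ_formula (J : Ideal A) (m n : ℕ) :
    iaQdim k J m ((n : ℤ) + 1) + idim k (iaA J (m+1) ((n:ℤ)+1)) + idim k (iaA J m n)
      = idim k (iaA J m ((n : ℤ) + 1)) + idim k (iaA J (m+1) n) := by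
  have hJ : J ^ (m+1) ≤ J ^ m := Ideal.pow_le_pow_right (Nat.le_succ m)
  have hN := ann_anti J (Nat.le_succ n)
  have e1 : ((n:ℤ)+1).toNat = n + 1 := by omega
  have e2 : (n:ℤ).toNat = n := by omega
  have e3 : (n:ℤ)+1-1 = n := by omega
  unfold iaQdim
  rw [e3]
  have hle : iaA J (m+1) ((n:ℤ)+1) ⊔ iaA J m n ≤ iaA J m ((n : ℤ) + 1) := by
    unfold iaA
    rw [e1, e2]
    exact sup_le (inf_le_inf_right _ hJ) (inf_le_inf_left _ hN)
  have hinf : iaA J (m+1) ((n:ℤ)+1) ⊓ iaA J m n = iaA J (m+1) n := by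
    unfold iaA
    rw [e1, e2]
    apply le_antisymm
    · exact le_inf (inf_le_left.trans inf_le_left) (inf_le_right.trans inf_le_right)
    · exact le_inf (inf_le_inf_left _ hN) (inf_le_inf_right _ hJ)
  have h1 := subquot_add (k := k) _ _ hle
  have h2 := idim_sup_inf (k := k) (iaA J (m+1) ((n:ℤ)+1)) (iaA J m n)
  rw [hinf] at h2
  omega

theorem finrank_range_flip {V W : Type*} [AddCommGroup V] [Module k V] [AddCommGroup W]
    [Module k W] [FiniteDimensional k V] [FiniteDimensional k W] (B : V →ₗ[k] W →ₗ[k] k) :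
    Module.finrank k (LinearMap.range B) = Module.finrank k (LinearMap.range B.flip) := by
  have h : B.flip = (B.dualMap).comp (Module.evalEquiv k W).toLinearMap := by
    ext w v
    simp [LinearMap.dualMap_apply]
  rw [h, LinearMap.range_comp_of_range_eq_top _ (LinearEquiv.range _)]
  exact (LinearMap.finrank_range_dualMap_eq_finrank_range B).symm

/-- the pairing of two ideals -/
noncomputable def pairing (φ : A →ₗ[k] k) (I K : Ideal A) :
    ↥(I.restrictScalars k) →ₗ[k] ↥(K.restrictScalars k) →ₗ[k] k :=
  ((LinearMap.mul k A).compr₂ φ).compl₁₂ (I.restrictScalars k).subtype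
    (K.restrictScalars k).subtype

theorem pairing_ker (φ : A →ₗ[k] k) (hφ : ∀ x : A, x ≠ 0 → ∃ c, φ (c * x) ≠ 0) (I K : Ideal A) :
    Module.finrank k (LinearMap.ker (pairing φ I K)) =
      idim k (I ⊓ Submodule.torsionBySet A A (K : Set A)) := by
  have h : LinearMap.ker (pairing φ I K) = Submodule.comap (I.restrictScalars k).subtype
      ((I ⊓ Submodule.torsionBySet A A (K : Set A)).restrictScalars k) := by
    ext ⟨a, ha⟩
    have ha' : a ∈ I := ha
    simp only [LinearMap.mem_ker, Submodule.mem_comap, Submodule.subtype_apply,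
      Submodule.restrictScalars_mem, Submodule.mem_inf, ha', true_and,
      Submodule.mem_torsionBySet_iff]
    constructor
    · rintro h ⟨b, hb⟩
      by_contra hne
      obtain ⟨c, hc⟩ := hφ _ hne
      apply hc
      have := LinearMap.congr_fun h ⟨c * b, K.mul_mem_left c hb⟩
      simp only [pairing, LinearMap.compl₁₂_apply, LinearMap.compr₂_apply, LinearMap.mul_apply',
        Submodule.subtype_apply, LinearMap.zero_apply] at this
      rw [← this]
      congr 1
      change c * (b * a) = a * (c * b)
      ring
    · intro h
      ext ⟨b, hb⟩
      have := h ⟨b, hb⟩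
      simp only [pairing, LinearMap.compl₁₂_apply, LinearMap.compr₂_apply, LinearMap.mul_apply',
        Submodule.subtype_apply, LinearMap.zero_apply]
      change b * a = 0 at this
      rw [mul_comm, this, map_zero]
  rw [h]
  exact (Submodule.comapSubtypeEquivOfLe
    (show (I ⊓ Submodule.torsionBySet A A (K : Set A)).restrictScalars k ≤ I.restrictScalars k
      from fun x hx => hx.1)).finrank_eq

theorem pairing_flip (φ : A →ₗ[k] k) (I K : Ideal A) : (pairing φ I K).flip = pairing φ K I := by
  ext a b
  simp [pairing, mul_comm]

theorem idim_symm (φ : A →ₗ[k] k) (hφ : ∀ x : A, x ≠ 0 → ∃ c, φ (c * x) ≠ 0) (I K : Ideal A) :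
    idim k (I ⊓ Submodule.torsionBySet A A (K : Set A)) + idim k K =
      idim k (K ⊓ Submodule.torsionBySet A A (I : Set A)) + idim k I := by
  have h1 := LinearMap.finrank_range_add_finrank_ker (pairing φ I K)
  have h2 := LinearMap.finrank_range_add_finrank_ker (pairing φ K I)
  rw [pairing_ker φ hφ] at h1 h2
  rw [finrank_range_flip, pairing_flip] at h1
  change _ = idim k I at h1
  change _ = idim k K at h2
  omega

theorem exists_phi (J : Ideal A)
    (hsoc : Module.finrank k
      ↥((Submodule.torsionBySet A A (J : Set A)).restrictScalars k) = 1)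
    (j : ℕ) (hj' : J ^ (j + 1) = ⊥) :
    ∃ φ : A →ₗ[k] k, ∀ x : A, x ≠ 0 → ∃ c, φ (c * x) ≠ 0 := by
  obtain ⟨⟨s, hs⟩, hs0, hgen⟩ := finrank_eq_one_iff'.mp hsoc
  have hs0' : s ≠ 0 := fun h => hs0 (Subtype.ext h)
  obtain ⟨φ, hφ⟩ := Module.Projective.exists_dual_ne_zero k hs0'
  refine ⟨φ, fun x hx => ?_⟩
  classical
  have hex : ∃ i, ∀ y ∈ J ^ i, y * x = 0 := ⟨j + 1, fun y hy => by
    rw [hj', Ideal.mem_bot] at hy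
    rw [hy, zero_mul]⟩
  have hspec := Nat.find_spec hex
  have hmin := fun i => Nat.find_min hex (m := i)
  generalize Nat.find hex = N at hspec hmin
  cases N with
  | zero => exact absurd (by simpa using hspec 1 (by simp)) hx
  | succ i =>
    have h := hmin i (Nat.lt_succ_self i)
    push Not at h
    obtain ⟨y, hy, hne⟩ := h
    refine ⟨y, ?_⟩
    have hmem : y * x ∈ (Submodule.torsionBySet A A (J : Set A)).restrictScalars k := by
      rw [Submodule.restrictScalars_mem, Submodule.mem_torsionBySet_iff]
      rintro ⟨b, hb⟩
      change b * (y * x) = 0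
      rw [← mul_assoc]
      apply hspec
      rw [pow_succ']
      exact Ideal.mul_mem_mul hb hy
    obtain ⟨c, hc⟩ := hgen ⟨y * x, hmem⟩
    have hc' : c • s = y * x := congrArg Subtype.val hc
    rw [← hc', map_smul, smul_eq_mul]
    refine mul_ne_zero ?_ hφ
    rintro rfl
    exact hne (by rw [← hc', zero_smul])

theorem iaQ_symm (φ : A →ₗ[k] k) (hφ : ∀ x : A, x ≠ 0 → ∃ c, φ (c * x) ≠ 0) (J : Ideal A)
    (m n : ℕ) : iaQdim k J m ((n : ℤ) + 1) = iaQdim k J n ((m : ℤ) + 1) := by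
  have h1 := iaQ_formula (k := k) J m n
  have h2 := iaQ_formula (k := k) J n m
  have key : ∀ a b : ℕ, idim k (iaA J a (b:ℤ)) + idim k (J ^ b) =
      idim k (iaA J b (a:ℤ)) + idim k (J ^ a) := fun a b => idim_symm φ hφ _ _
  have k1 := key m n
  have k2 := key (m+1) n
  have k3 := key m (n+1)
  have k4 := key (m+1) (n+1)
  push_cast at k1 k2 k3 k4
  omega

end helpers

/-- **Iarrobino symmetry.** Let `(A, 𝔪)` be a finite local Gorenstein
`k`-algebra of socle degree `j` (the largest `j` with `𝔪^j ≠ 0`). Then for all `m ≥ 0`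
and `n ≥ 1`, `dim_k Q_{m,n} = dim_k Q_{n-1,m+1}`; equivalently, the rows of the Hilbert
function decomposition satisfy `Δ_s(t) = Δ_s((j-s)-t)`, i.e. each `Δ_s` is symmetric
about `(j-s)/2`. -/
theorem deformations_stmt12 {k A : Type*} [Field k]
    [CommRing A] [Algebra k A] [IsLocalRing A] [FiniteDimensional k A]
    -- the residue field A/𝔪 is k
    (hres : Function.Bijective (algebraMap k (IsLocalRing.ResidueField A)))
    -- the socle soc(A) has k-dimension 1 (A is Gorenstein)
    (hsoc : Module.finrank k
      ↥((Submodule.torsionBySet A A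
          ((IsLocalRing.maximalIdeal A : Ideal A) : Set A)).restrictScalars k) = 1)
    -- j is the socle degree of A
    (j : ℕ) (hj : IsLocalRing.maximalIdeal A ^ j ≠ ⊥)
    (hj' : IsLocalRing.maximalIdeal A ^ (j + 1) = ⊥) :
    (∀ m n : ℕ, 1 ≤ n →
      iaQdim k (IsLocalRing.maximalIdeal A) m (n : ℤ) =
        iaQdim k (IsLocalRing.maximalIdeal A) (n - 1) ((m : ℤ) + 1)) ∧
    (∀ s t : ℕ, s ≤ j → s + t ≤ j →
      iaDelta k (IsLocalRing.maximalIdeal A) j s t =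
        iaDelta k (IsLocalRing.maximalIdeal A) j s (j - s - t)) := by
  obtain ⟨φ, hφ⟩ := exists_phi (k := k) _ hsoc j hj'
  refine ⟨?_, ?_⟩
  · intro m n hn
    obtain ⟨n, rfl⟩ : ∃ n', n = n' + 1 := ⟨n - 1, by omega⟩
    have := iaQ_symm φ hφ (IsLocalRing.maximalIdeal A) m n
    simpa using this
  · intro s t hs hst
    unfold iaDelta
    rw [if_pos ⟨hs, hst⟩, if_pos ⟨hs, by omega⟩]
    have := iaQ_symm φ hφ (IsLocalRing.maximalIdeal A) t (j - s - t)
    convert this using 2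
    · omega
    · omega
end

section
/- Let k be a field of characteristic zero and let f₁, f₂ ∈ S = k[x₁,…,xₙ] both have degree j, with deg(f₁ − f₂) ≤ j − a for some a ≥ 1. Let Δ and Δ' be the Hilbert function decompositions of the apolar algebras T/Ann(f₁) and T/Ann(f₂) respectively. Then Δ_m(t) = Δ'_m(t) for all m ≤ a − 1 and all t. -/
section helpers

open MvPolynomial

/-- `M^m ∩ (I : M^n)` in the ambient ring. -/
noncomputable def ambP {T : Type*} [CommRing T] (I M : Ideal T) (m : ℕ) (n : ℕ) : Ideal T :=
  M ^ m ⊓ I.colon ((M ^ n : Ideal T) : Set T)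

lemma mem_ambP {T : Type*} [CommRing T] (I M : Ideal T) (m n : ℕ) (x : T) :
    x ∈ ambP I M m n ↔ x ∈ M ^ m ∧ ∀ y ∈ M ^ n, x * y ∈ I := by
  simp [ambP, Submodule.mem_inf, Submodule.mem_colon]

lemma iaA_eq_map {T : Type*} [CommRing T] (I M : Ideal T) (m : ℕ) (n : ℤ) :
    iaA (Ideal.map (Ideal.Quotient.mk I) M) m n =
      Ideal.map (Ideal.Quotient.mk I) (ambP I M m n.toNat) := by
  have hs : Function.Surjective (Ideal.Quotient.mk I) := Ideal.Quotient.mk_surjective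
  ext x
  rw [iaA, Submodule.mem_inf, ← Ideal.map_pow, ← Ideal.map_pow,
    Ideal.mem_map_iff_of_surjective _ hs, Ideal.mem_map_iff_of_surjective _ hs,
    Submodule.mem_torsionBySet_iff]
  constructor
  · rintro ⟨⟨D, hD, rfl⟩, h⟩
    refine ⟨D, (mem_ambP _ _ _ _ _).2 ⟨hD, fun y hy => ?_⟩, rfl⟩
    have := h ⟨Ideal.Quotient.mk I y, Ideal.mem_map_of_mem _ hy⟩
    rw [← Ideal.Quotient.eq_zero_iff_mem, map_mul, mul_comm]
    exact this
  · rintro ⟨D, hD, rfl⟩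
    rw [mem_ambP] at hD
    refine ⟨⟨D, hD.1, rfl⟩, ?_⟩
    rintro ⟨y, hy⟩
    obtain ⟨E, hE, rfl⟩ := (Ideal.mem_map_iff_of_surjective _ hs).1 hy
    change Ideal.Quotient.mk I E * Ideal.Quotient.mk I D = 0
    rw [← map_mul, Ideal.Quotient.eq_zero_iff_mem, mul_comm]
    exact hD.2 E hE

lemma subquotDim_map (k : Type*) {T : Type*} [Field k] [CommRing T] [Algebra k T]
    (I P Q : Ideal T) (h1 : P ⊓ I ≤ Q) (h2 : Q ≤ P) :
    subquotDim k (Ideal.map (Ideal.Quotient.mk I) P) (Ideal.map (Ideal.Quotient.mk I) Q) =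
      subquotDim k P Q := by
  have hs : Function.Surjective (Ideal.Quotient.mk I) := Ideal.Quotient.mk_surjective
  let g : ↥(P.restrictScalars k) →ₗ[k]
      ↥((Ideal.map (Ideal.Quotient.mk I) P).restrictScalars k) :=
    LinearMap.restrict (Ideal.Quotient.mkₐ k I).toLinearMap
      (fun x hx => Ideal.mem_map_of_mem (Ideal.Quotient.mk I) hx)
  have hg : Function.Surjective g := by
    rintro ⟨y, hy⟩
    obtain ⟨E, hE, rfl⟩ := (Ideal.mem_map_iff_of_surjective _ hs).1 hy
    exact ⟨⟨E, hE⟩, rfl⟩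
  let N := Submodule.comap ((Ideal.map (Ideal.Quotient.mk I) P).restrictScalars k).subtype
    ((Ideal.map (Ideal.Quotient.mk I) Q).restrictScalars k)
  let q := N.mkQ ∘ₗ g
  have hq : Function.Surjective q := (Submodule.mkQ_surjective N).comp hg
  have hk : LinearMap.ker q =
      Submodule.comap (P.restrictScalars k).subtype (Q.restrictScalars k) := by
    ext ⟨x, hx⟩
    have hx' : x ∈ P := hx
    have : q ⟨x, hx⟩ = 0 ↔ Ideal.Quotient.mk I x ∈ Ideal.map (Ideal.Quotient.mk I) Q :=
      Submodule.Quotient.mk_eq_zero N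
    rw [LinearMap.mem_ker, this, Ideal.mem_map_iff_of_surjective _ hs]
    change _ ↔ x ∈ Q
    constructor
    · rintro ⟨y, hy, hxy⟩
      have h3 : y - x ∈ I := (Ideal.Quotient.eq).1 hxy
      have h4 : y - x ∈ Q := h1 ⟨P.sub_mem (h2 hy) hx', h3⟩
      simpa using Q.sub_mem hy h4
    · intro h
      exact ⟨x, h, rfl⟩
  have e := (LinearMap.quotKerEquivOfSurjective q hq).finrank_eq
  rw [hk] at e
  exact e.symm

lemma iaQdim_eq (k : Type*) {T : Type*} [Field k] [CommRing T] [Algebra k T]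
    (I M : Ideal T) (m : ℕ) (n : ℕ) :
    iaQdim k (Ideal.map (Ideal.Quotient.mk I) M) m ((n : ℤ) + 1) =
      subquotDim k (ambP I M m (n + 1)) (ambP I M (m + 1) (n + 1) ⊔ ambP I M m n) := by
  have e1 : ((n : ℤ) + 1).toNat = n + 1 := by omega
  have e2 : ((n : ℤ) + 1 - 1).toNat = n := by omega
  rw [iaQdim, iaA_eq_map, iaA_eq_map, iaA_eq_map, e1, e2, ← Ideal.map_sup]
  apply subquotDim_map
  · intro x hx
    refine Ideal.mem_sup_right ((mem_ambP _ _ _ _ _).2 ⟨((mem_ambP _ _ _ _ _).1 hx.1).1, ?_⟩)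
    exact fun y _ => I.mul_mem_right _ hx.2
  · refine sup_le ?_ ?_ <;> intro x hx <;> rw [mem_ambP] at hx ⊢
    · exact ⟨Ideal.pow_le_pow_right (Nat.le_succ m) hx.1, hx.2⟩
    · exact ⟨hx.1, fun y hy => hx.2 y (Ideal.pow_le_pow_right (Nat.le_succ n) hy)⟩

lemma ambP_congr {T : Type*} [CommRing T] (I₁ I₂ M : Ideal T) (N : ℕ)
    (h : ∀ D ∈ M ^ N, (D ∈ I₁ ↔ D ∈ I₂)) (m n : ℕ) (hmn : N ≤ m + n) :
    ambP I₁ M m n = ambP I₂ M m n := by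
  ext x
  rw [mem_ambP, mem_ambP]
  refine and_congr_right fun hx => forall₂_congr fun y hy => h _ ?_
  exact Ideal.pow_le_pow_right hmn (by rw [pow_add]; exact Ideal.mul_mem_mul hx hy)

lemma apolar_sub {k : Type*} [Field k] {n : ℕ} (D f g : MvPolynomial (Fin n) k) :
    apolar D (f - g) = apolar D f - apolar D g := by
  classical
  have key : ∀ h : MvPolynomial (Fin n) k, h.support ⊆ f.support ∪ g.support →
      apolar D h = ∑ a ∈ D.support, ∑ b ∈ f.support ∪ g.support,
        MvPolynomial.monomial (b - a)
          (D.coeff a * h.coeff b * ∏ i : Fin n, ((b i).descFactorial (a i) : k)) := by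
    intro h hh
    refine Finset.sum_congr rfl fun a _ => Finset.sum_subset hh fun b _ hb => ?_
    rw [notMem_support_iff.1 hb]
    simp
  rw [key _ (support_sub _ f g), key f Finset.subset_union_left,
    key g Finset.subset_union_right, ← Finset.sum_sub_distrib]
  refine Finset.sum_congr rfl fun a _ => ?_
  rw [← Finset.sum_sub_distrib]
  refine Finset.sum_congr rfl fun b _ => ?_
  rw [← map_sub, coeff_sub]
  congr 1
  ring

lemma apolar_eq_zero {k : Type*} [Field k] {n : ℕ} (D g : MvPolynomial (Fin n) k) (N : ℕ)
    (hD : D ∈ (Ideal.span (Set.range (X : Fin n → MvPolynomial (Fin n) k))) ^ N)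
    (hg : g.totalDegree < N) : apolar D g = 0 := by
  refine Finset.sum_eq_zero fun a ha => Finset.sum_eq_zero fun b hb => ?_
  have h1 : N ≤ a.degree := by
    by_contra hlt
    exact mem_support_iff.1 ha ((mem_pow_idealOfVars_iff' N D).1 hD a (by omega))
  have h2 : b.degree ≤ g.totalDegree := le_totalDegree hb
  have : ∃ i, b i < a i := by
    by_contra hc
    push Not at hc
    have h3 : a.degree ≤ b.degree := Finsupp.degree_mono hc
    omega
  obtain ⟨i, hi⟩ := this
  rw [Finset.prod_eq_zero (Finset.mem_univ i)]
  · simp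
  · rw [Nat.descFactorial_eq_zero_iff_lt.2 hi, Nat.cast_zero]

end helpers

/-- Let `k` be a field of characteristic zero and `f₁, f₂ ∈ k[x₁,…,xₙ]`
both of degree `j`, with `deg(f₁ - f₂) ≤ j - a` for some `a ≥ 1`. Let `Δ` and `Δ'` be the
Hilbert function decompositions of the apolar algebras `T/Ann(f₁)` and `T/Ann(f₂)`.
Then `Δ_m(t) = Δ'_m(t)` for all `m ≤ a - 1` and all `t`. -/
theorem deformations_stmt15 {k : Type*} [Field k] [CharZero k] {n : ℕ}
    (j a : ℕ) (ha : 1 ≤ a)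
    (f₁ f₂ : MvPolynomial (Fin n) k)
    (hdeg₁ : f₁.totalDegree = j) (hdeg₂ : f₂.totalDegree = j)
    -- deg (f₁ - f₂) ≤ j - a  (as integers; the zero polynomial has degree -∞)
    (hdiff : f₁ - f₂ = 0 ∨ ((f₁ - f₂).totalDegree : ℤ) ≤ (j : ℤ) - (a : ℤ))
    -- I₁, I₂ are the apolar ideals Ann(f₁), Ann(f₂)
    (I₁ I₂ : Ideal (MvPolynomial (Fin n) k))
    (hI₁ : (I₁ : Set (MvPolynomial (Fin n) k)) = {D | apolar D f₁ = 0})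
    (hI₂ : (I₂ : Set (MvPolynomial (Fin n) k)) = {D | apolar D f₂ = 0}) :
    -- the Hilbert function decompositions (w.r.t. the maximal ideals of the apolar
    -- algebras, i.e. the images of (y₁,…,yₙ)) agree in rows m ≤ a - 1
    ∀ m t : ℕ, m ≤ a - 1 →
      iaDelta k (Ideal.map (Ideal.Quotient.mk I₁)
          (Ideal.span (Set.range (MvPolynomial.X : Fin n → MvPolynomial (Fin n) k)))) j m t =
      iaDelta k (Ideal.map (Ideal.Quotient.mk I₂)
          (Ideal.span (Set.range (MvPolynomial.X : Fin n → MvPolynomial (Fin n) k)))) j m t := by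
  intro m t hm
  have hI : ∀ D ∈ (Ideal.span (Set.range
      (MvPolynomial.X : Fin n → MvPolynomial (Fin n) k))) ^ (j - m), m ≤ j →
      (D ∈ I₁ ↔ D ∈ I₂) := by
    intro D hD hmj
    have h0 : apolar D (f₁ - f₂) = 0 := by
      rcases hdiff with h | h
      · rw [h]; simp [apolar]
      · exact apolar_eq_zero D _ (j - m) hD (by omega)
    rw [apolar_sub, sub_eq_zero] at h0
    rw [← SetLike.mem_coe, ← SetLike.mem_coe, hI₁, hI₂, Set.mem_setOf_eq, Set.mem_setOf_eq, h0]
  unfold iaDelta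
  split_ifs with hc
  · have e : (j : ℤ) + 1 - (m + t) = ((j - m - t : ℕ) : ℤ) + 1 := by omega
    have hI' := fun D hD => hI D hD hc.1
    rw [e, iaQdim_eq, iaQdim_eq,
      ambP_congr I₁ I₂ _ _ hI' t (j - m - t + 1) (by omega),
      ambP_congr I₁ I₂ _ _ hI' (t + 1) (j - m - t + 1) (by omega),
      ambP_congr I₁ I₂ _ _ hI' t (j - m - t) (by omega)]
  · rfl
end

section
/- Let k be a field, n ≥ 0, and consider the polynomial ring k[y₁,…,yₙ,α]. Let o ≥ 2 and 0 < c < o be integers, q ∈ k[y₁,…,yₙ], and let J be an ideal of k[y₁,…,yₙ,α] generated by elements of the ideal (y₁,…,yₙ) that are homogeneous with respect to the grading by the α-degree. Set R = k[y₁,…,yₙ,α]/J and suppose that ann_R(α^o) ⊆ ann_R(α^c) and ann_R(α^o) ⊆ ann_R(q), where ann_R(r) = {s ∈ R : s·r = 0}. Then the k[t]-algebra k[y₁,…,yₙ,α,t]/((α^o − t·α^c − q) + J·k[y₁,…,yₙ,α,t]) is flat as a k[t]-module. -/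
open Polynomial in
/-- Apply an additive map coefficientwise. -/
noncomputable def coeffwise {k R : Type*} [Field k] [CommRing R] [Algebra k R] (φ : R →ₗ[k] R)
    (f : R[X]) : R[X] :=
  ∑ j ∈ Finset.range (f.natDegree + 1), monomial j (φ (f.coeff j))

open Polynomial in
theorem coeff_coeffwise {k R : Type*} [Field k] [CommRing R] [Algebra k R] (φ : R →ₗ[k] R)
    (f : R[X]) (j : ℕ) : (coeffwise φ f).coeff j = φ (f.coeff j) := by
  unfold coeffwise
  rw [finsetSum_coeff]
  simp only [coeff_monomial, Finset.sum_ite_eq', Finset.mem_range]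
  split_ifs with h
  · rfl
  · rw [coeff_eq_zero_of_natDegree_lt (by omega), map_zero]

open Polynomial in
theorem coeffwise_map_mul {k R : Type*} [Field k] [CommRing R] [Algebra k R] (φ : R →ₗ[k] R)
    (p : k[X]) (f : R[X]) :
    coeffwise φ (p.map (algebraMap k R) * f) = p.map (algebraMap k R) * coeffwise φ f := by
  ext j
  simp only [coeff_coeffwise, coeff_mul, coeff_map, map_sum, ← Algebra.smul_def, map_smul]

open Polynomial in
theorem monic_mul_eq_zero_of_degree_lt {R : Type*} [CommRing R] {p f s : R[X]} (hp : p.Monic)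
    (h : p * f = s) (hs : ∀ j, p.natDegree ≤ j → s.coeff j = 0) : s = 0 := by
  nontriviality R
  have hd : s.degree < p.degree := by
    rw [degree_eq_natDegree hp.ne_zero, degree_lt_iff_coeff_zero]
    exact hs
  have h1 := (div_modByMonic_unique (f := s) f 0 hp ⟨by rw [zero_add, h], by
    rw [degree_zero]; exact bot_lt_iff_ne_bot.2 (degree_ne_bot.2 hp.ne_zero)⟩).2
  rwa [(modByMonic_eq_self_iff hp).2 hd] at h1

open Polynomial in
theorem core_torsion {k R : Type*} [Field k] [CommRing R] [Algebra k R]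
    (comp : ℕ → R →ₗ[k] R) (a q : R) (o c : ℕ) (hco : c < o)
    (ha : ∀ d i x, comp (d + i) (a ^ d * x) = a ^ d * comp i x)
    (hq : ∀ i x, comp i (q * x) = q * comp i x)
    (hsum : ∀ x, ∃ N, (∀ i, N ≤ i → comp i x = 0) ∧ x = ∑ i ∈ Finset.range N, comp i x)
    (h1 : ∀ s, s * a ^ o = 0 → s * a ^ c = 0)
    (h2 : ∀ s, s * a ^ o = 0 → s * q = 0)
    (p : k[X]) (hp : p.Monic) (f g : R[X])
    (h : p.map (algebraMap k R) * f = (C (a ^ o) - X * C (a ^ c) - C q) * g) :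
    ∃ h, f = (C (a ^ o) - X * C (a ^ c) - C q) * h := by
  nontriviality R
  set P := p.map (algebraMap k R) with hPdef
  have hP : P.Monic := hp.map _
  set F : R[X] := C (a ^ o) - X * C (a ^ c) - C q with hF
  set r := g %ₘ P with hr
  set e := g /ₘ P with he
  have hg : r + P * e = g := modByMonic_add_div g P
  have hrdeg : ∀ j, P.natDegree ≤ j → r.coeff j = 0 := by
    have := degree_modByMonic_lt g hP
    rw [degree_eq_natDegree hP.ne_zero, degree_lt_iff_coeff_zero] at this
    exact this
  have hfr : P * (f - F * e) = F * r := by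
    rw [mul_sub, h, ← hg]; ring
  -- uniform bound
  have hcoef : ∀ j, (F * r).coeff j =
      a ^ o * r.coeff j - (X * (C (a ^ c) * r)).coeff j - q * r.coeff j := by
    intro j
    rw [hF, sub_mul, sub_mul, coeff_sub, coeff_sub, coeff_C_mul, coeff_C_mul, mul_assoc]
  obtain ⟨N, hN⟩ : ∃ N, ∀ j i, N ≤ i → comp i (r.coeff j) = 0 := by
    choose M hM using hsum
    refine ⟨(Finset.range (P.natDegree)).sup fun j => M (r.coeff j), fun j i hi => ?_⟩
    by_cases hj : P.natDegree ≤ j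
    · rw [hrdeg j hj, map_zero]
    · exact (hM (r.coeff j)).1 i (le_trans (Finset.le_sup (f := fun j => M (r.coeff j))
        (Finset.mem_range.2 (not_le.1 hj))) hi)
  have key : ∀ m i, N ≤ i + m → ∀ j, comp i (r.coeff j) * a ^ o = 0 := by
    intro m
    induction m with
    | zero => intro i hi j; rw [hN j i hi, zero_mul]
    | succ m ih =>
      intro i hi
      have hlater : ∀ i', i < i' → ∀ j, comp i' (r.coeff j) * a ^ o = 0 :=
        fun i' hi' => ih i' (by omega)
      have hcw : ∀ j, (coeffwise (comp (o + i)) (F * r)).coeff j = a ^ o * comp i (r.coeff j) := by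
        intro j
        rw [coeff_coeffwise, hcoef, map_sub, map_sub, ha, hq]
        have e1 : comp (o + i) ((X * (C (a ^ c) * r)).coeff j) = 0 := by
          cases j with
          | zero => simp
          | succ j =>
            rw [coeff_X_mul, coeff_C_mul, show o + i = c + (o - c + i) by omega, ha, mul_comm]
            exact h1 _ (hlater _ (by omega) j)
        have e2 : q * comp (o + i) (r.coeff j) = 0 := by
          rw [mul_comm]; exact h2 _ (hlater _ (by omega) j)
        rw [e1, e2, sub_zero, sub_zero]
      have hz : coeffwise (comp (o + i)) (F * r) = 0 := by
        refine monic_mul_eq_zero_of_degree_lt hP (f := coeffwise (comp (o + i)) (f - F * e)) ?_ ?_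
        · rw [← hfr, coeffwise_map_mul]
        · intro j hj
          rw [hcw, hrdeg j hj, map_zero, mul_zero]
      intro j
      rw [mul_comm, ← hcw, hz, coeff_zero]
  have hkill : ∀ j, r.coeff j * a ^ o = 0 := by
    intro j
    obtain ⟨M, -, hM⟩ := hsum (r.coeff j)
    rw [hM, Finset.sum_mul]
    exact Finset.sum_eq_zero fun i _ => key N i (by omega) j
  have hFr : F * r = 0 := by
    ext j
    rw [hcoef, mul_comm, hkill, mul_comm q, h2 _ (hkill j)]
    cases j with
    | zero => simp
    | succ j => rw [coeff_X_mul, coeff_C_mul, mul_comm, h1 _ (hkill j)]; simp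
  refine ⟨e, ?_⟩
  rw [hFr] at hfr
  have := (hP.mul_right_eq_zero_iff).1 hfr
  exact sub_eq_zero.1 this

open MvPolynomial in
theorem exists_comp {k : Type*} [Field k] {n : ℕ}
    (q : MvPolynomial (Fin n) k)
    (J : Ideal (MvPolynomial (Fin (n + 1)) k))
    (G : Set (MvPolynomial (Fin (n + 1)) k))
    (hJG : J = Ideal.span G)
    (hGhom : ∀ g ∈ G, ∃ d : ℕ, ∀ b ∈ g.support, b (Fin.last n) = d) :
    ∃ comp : ℕ → (MvPolynomial (Fin (n + 1)) k ⧸ J) →ₗ[k] (MvPolynomial (Fin (n + 1)) k ⧸ J),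
    (∀ d i x, comp (d + i) ((Ideal.Quotient.mk J (X (Fin.last n))) ^ d * x) =
      (Ideal.Quotient.mk J (X (Fin.last n))) ^ d * comp i x) ∧
    (∀ i x, comp i (Ideal.Quotient.mk J (rename Fin.castSucc q) * x) =
      Ideal.Quotient.mk J (rename Fin.castSucc q) * comp i x) ∧
    (∀ x, ∃ N, (∀ i, N ≤ i → comp i x = 0) ∧ x = ∑ i ∈ Finset.range N, comp i x) := by
  classical
  let w : Fin (n + 1) → ℕ := Pi.single (Fin.last n) 1
  have hw : ∀ b : Fin (n + 1) →₀ ℕ, Finsupp.weight w b = b (Fin.last n) := by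
    intro b
    rw [Finsupp.weight_apply, Finsupp.sum_fintype _ _ (by simp)]
    simp [w, Pi.single_apply]
  let 𝒜 := weightedHomogeneousSubmodule k w
  letI : GradedAlgebra 𝒜 := weightedGradedAlgebra k w
  have hJ : J.IsHomogeneous 𝒜 := by
    rw [hJG]
    refine Ideal.homogeneous_span 𝒜 G fun g hg => ?_
    obtain ⟨d, hd⟩ := hGhom g hg
    refine ⟨d, ?_⟩
    rw [mem_weightedHomogeneousSubmodule]
    intro b hb
    rw [hw]
    exact hd b (mem_support_iff.2 hb)
  let π : ℕ → MvPolynomial (Fin (n + 1)) k →ₗ[k] MvPolynomial (Fin (n + 1)) k :=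
    fun i => GradedAlgebra.proj 𝒜 i
  have hπ : ∀ i, J.restrictScalars k ≤ (J.restrictScalars k).comap (π i) := by
    intro i x hx
    exact hJ i hx
  let comp : ℕ → (MvPolynomial (Fin (n + 1)) k ⧸ J) →ₗ[k] (MvPolynomial (Fin (n + 1)) k ⧸ J) :=
    fun i => Submodule.mapQ (J.restrictScalars k) (J.restrictScalars k) (π i) (hπ i)
  have hcomp : ∀ i x, comp i (Ideal.Quotient.mk J x) = Ideal.Quotient.mk J (π i x) :=
    fun i x => rfl
  have hπmul : ∀ d i x y, x ∈ 𝒜 d → π (d + i) (x * y) = x * π i y := by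
    intro d i x y hx
    exact DirectSum.coe_decompose_mul_add_of_left_mem 𝒜 hx
  refine ⟨comp, ?_, ?_, ?_⟩
  · intro d i x
    obtain ⟨x, rfl⟩ := Ideal.Quotient.mk_surjective x
    rw [← map_pow, ← map_mul, hcomp, hcomp, ← map_mul, hπmul]
    have := (isWeightedHomogeneous_X k w (Fin.last n)).pow d
    have hd : d • w (Fin.last n) = d := by simp [w]
    rw [hd] at this
    exact this
  · intro i x
    obtain ⟨x, rfl⟩ := Ideal.Quotient.mk_surjective x
    rw [← map_mul, hcomp, hcomp, ← map_mul]
    have := hπmul 0 i (rename Fin.castSucc q) x ?_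
    · rw [zero_add] at this
      rw [this]
    · rw [mem_weightedHomogeneousSubmodule]
      intro b hb
      rw [hw]
      obtain ⟨u, rfl, -⟩ := coeff_rename_ne_zero _ _ _ hb
      rw [Finsupp.mapDomain_of_notMem_range]
      rintro ⟨i, hi⟩
      exact (Fin.castSucc_lt_last i).ne hi
  · intro x
    obtain ⟨x, rfl⟩ := Ideal.Quotient.mk_surjective x
    have hz : ∀ i, i ∉ (DirectSum.decompose 𝒜 x).support → π i x = 0 := by
      intro i hi
      by_contra hne
      exact hi ((GradedAlgebra.mem_support_iff 𝒜 x i).2 hne)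
    refine ⟨(DirectSum.decompose 𝒜 x).support.sup id + 1, ?_, ?_⟩
    · intro i hi
      rw [hcomp, hz, map_zero]
      intro hmem
      have := Finset.le_sup (f := id) hmem
      simp only [id] at this
      omega
    · simp only [hcomp]
      rw [← map_sum]
      congr 1
      conv_lhs => rw [← DirectSum.sum_support_decompose 𝒜 x]
      refine Finset.sum_subset ?_ (fun i _ hi => hz i hi)
      intro i hi
      have := Finset.le_sup (f := id) hi
      simp only [id] at this
      exact Finset.mem_range.2 (by omega)

/-- The ideal `(α^o − t·α^c − q) + J·k[y₁,…,yₙ,α,t]` of `k[y₁,…,yₙ,α,t]`, where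
`k[y₁,…,yₙ,α,t] = k[z₁,…,zₙ₊₂]` with `α = zₙ₊₁`, `t = zₙ₊₂`, and `J` is extended along
the inclusion `k[y₁,…,yₙ,α] → k[y₁,…,yₙ,α,t]`. -/
noncomputable def deformIdeal {k : Type*} [Field k] {n : ℕ} (o c : ℕ)
    (q : MvPolynomial (Fin n) k) (J : Ideal (MvPolynomial (Fin (n + 1)) k)) :
    Ideal (MvPolynomial (Fin (n + 2)) k) :=
  Ideal.span
    {(MvPolynomial.X (Fin.castSucc (Fin.last n)) : MvPolynomial (Fin (n + 2)) k) ^ o -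
      MvPolynomial.X (Fin.last (n + 1)) * MvPolynomial.X (Fin.castSucc (Fin.last n)) ^ c -
      MvPolynomial.rename (Fin.castSucc ∘ Fin.castSucc) q}
  ⊔ Ideal.map (MvPolynomial.rename (Fin.castSucc : Fin (n + 1) → Fin (n + 2))) J

/-- The `k`-algebra map `k[t] → k[y₁,…,yₙ,α,t]/((α^o − t·α^c − q) + J)` giving the
quotient its `k[t]`-algebra structure. -/
noncomputable def deformStructMap {k : Type*} [Field k] {n : ℕ} (o c : ℕ)
    (q : MvPolynomial (Fin n) k) (J : Ideal (MvPolynomial (Fin (n + 1)) k)) :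
    Polynomial k →+* (MvPolynomial (Fin (n + 2)) k ⧸ deformIdeal o c q J) :=
  (Polynomial.aeval
    (Ideal.Quotient.mk (deformIdeal o c q J)
      (MvPolynomial.X (Fin.last (n + 1))))).toRingHom

/-- Let `k` be a field, `n ≥ 0`, and consider `k[y₁,…,yₙ,α]` (here
realized as `k[y₁,…,yₙ₊₁]` with `α = yₙ₊₁`). Let `o ≥ 2`, `0 < c < o`, `q ∈ k[y₁,…,yₙ]`,
and let `J` be an ideal of `k[y₁,…,yₙ,α]` generated by elements of the ideal `(y₁,…,yₙ)`
that are homogeneous with respect to the `α`-degree. Set `R = k[y₁,…,yₙ,α]/J` and assume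
`ann_R(α^o) ⊆ ann_R(α^c)` and `ann_R(α^o) ⊆ ann_R(q)`. Then the `k[t]`-algebra
`k[y₁,…,yₙ,α,t]/((α^o − t·α^c − q) + J·k[y,α,t])` is flat over `k[t]`. -/
theorem deformations_stmt18 {k : Type*} [Field k] {n : ℕ}
    (o c : ℕ) (ho : 2 ≤ o) (hc : 0 < c) (hco : c < o)
    (q : MvPolynomial (Fin n) k)
    (J : Ideal (MvPolynomial (Fin (n + 1)) k))
    -- J is generated by elements of (y₁,…,yₙ) homogeneous in the α-degree
    (G : Set (MvPolynomial (Fin (n + 1)) k))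
    (hJG : J = Ideal.span G)
    (hGy : ∀ g ∈ G,
      g ∈ Ideal.span (Set.range fun i : Fin n =>
        (MvPolynomial.X (Fin.castSucc i) : MvPolynomial (Fin (n + 1)) k)))
    (hGhom : ∀ g ∈ G, ∃ d : ℕ, ∀ b ∈ g.support, b (Fin.last n) = d)
    -- ann_R(α^o) ⊆ ann_R(α^c)
    (hann1 : ∀ s : MvPolynomial (Fin (n + 1)) k ⧸ J,
      s * (Ideal.Quotient.mk J (MvPolynomial.X (Fin.last n))) ^ o = 0 →
      s * (Ideal.Quotient.mk J (MvPolynomial.X (Fin.last n))) ^ c = 0)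
    -- ann_R(α^o) ⊆ ann_R(q)
    (hann2 : ∀ s : MvPolynomial (Fin (n + 1)) k ⧸ J,
      s * (Ideal.Quotient.mk J (MvPolynomial.X (Fin.last n))) ^ o = 0 →
      s * (Ideal.Quotient.mk J (MvPolynomial.rename Fin.castSucc q)) = 0) :
    RingHom.Flat (deformStructMap o c q J) := by
  classical
  obtain ⟨comp, ha, hq, hsum⟩ := exists_comp q J G hJG hGhom
  have core := core_torsion comp _ _ o c hco ha hq hsum hann1 hann2
  let φ : MvPolynomial (Fin (n + 2)) k →ₐ[k] Polynomial (MvPolynomial (Fin (n + 1)) k ⧸ J) :=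
    MvPolynomial.aeval (Fin.lastCases Polynomial.X
      (fun i => Polynomial.C (Ideal.Quotient.mk J (MvPolynomial.X i))))
  have hφlast : φ (MvPolynomial.X (Fin.last (n + 1))) = Polynomial.X := by
    simp [φ]
  have hφcast : ∀ i : Fin (n + 1), φ (MvPolynomial.X (Fin.castSucc i)) =
      Polynomial.C (Ideal.Quotient.mk J (MvPolynomial.X i)) := by
    intro i
    simp [φ]
  have hφren : ∀ x : MvPolynomial (Fin (n + 1)) k, φ (MvPolynomial.rename Fin.castSucc x) =
      Polynomial.C (Ideal.Quotient.mk J x) := by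
    intro x
    have : (φ.comp (MvPolynomial.rename Fin.castSucc)).toRingHom =
        (Polynomial.C.comp (Ideal.Quotient.mk J)) := by
      apply MvPolynomial.ringHom_ext
      · intro r
        simp [φ]
        rfl
      · intro i
        simpa using hφcast i
    exact congrArg (fun g => g x) this
  let η0 : (MvPolynomial (Fin (n + 1)) k ⧸ J) →+*
      (MvPolynomial (Fin (n + 2)) k ⧸ deformIdeal o c q J) :=
    Ideal.Quotient.lift J ((Ideal.Quotient.mk (deformIdeal o c q J)).comp
      (MvPolynomial.rename (Fin.castSucc : Fin (n + 1) → Fin (n + 2))).toRingHom) (by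
        intro x hx
        refine Ideal.Quotient.eq_zero_iff_mem.2 ?_
        exact Ideal.mem_sup_right (Ideal.mem_map_of_mem _ hx))
  let η : Polynomial (MvPolynomial (Fin (n + 1)) k ⧸ J) →+*
      (MvPolynomial (Fin (n + 2)) k ⧸ deformIdeal o c q J) :=
    Polynomial.eval₂RingHom η0 (Ideal.Quotient.mk _ (MvPolynomial.X (Fin.last (n + 1))))
  have hη0 : ∀ x, η0 (Ideal.Quotient.mk J x) =
      Ideal.Quotient.mk _ (MvPolynomial.rename Fin.castSucc x) := fun x => rfl
  have hηC : ∀ x, η (Polynomial.C x) = η0 x := fun x => Polynomial.eval₂_C _ _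
  have hηX : η Polynomial.X = Ideal.Quotient.mk _ (MvPolynomial.X (Fin.last (n + 1))) :=
    Polynomial.eval₂_X _ _
  have hηφ : ∀ x, η (φ x) = Ideal.Quotient.mk _ x := by
    intro x
    have : η.comp φ.toRingHom = Ideal.Quotient.mk (deformIdeal o c q J) := by
      apply MvPolynomial.ringHom_ext
      · intro r
        have h1 : φ (MvPolynomial.C r) = Polynomial.C (Ideal.Quotient.mk J (MvPolynomial.C r)) := by
          rw [← hφren, MvPolynomial.rename_C]
        change η (φ (MvPolynomial.C r)) = _
        rw [h1, hηC, hη0, MvPolynomial.rename_C]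
      · intro i
        change η (φ (MvPolynomial.X i)) = _
        refine Fin.lastCases ?_ (fun i => ?_) i
        · rw [hφlast, hηX]
        · rw [hφcast, hηC, hη0, MvPolynomial.rename_X]
    exact congrArg (fun g => g x) this
  -- the image of the deformation equation
  set a := Ideal.Quotient.mk J (MvPolynomial.X (Fin.last n)) with hadef
  set qq := Ideal.Quotient.mk J (MvPolynomial.rename Fin.castSucc q) with hqdef
  set F : Polynomial (MvPolynomial (Fin (n + 1)) k ⧸ J) :=
    Polynomial.C (a ^ o) - Polynomial.X * Polynomial.C (a ^ c) - Polynomial.C qq with hF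
  set E : MvPolynomial (Fin (n + 2)) k :=
    (MvPolynomial.X (Fin.castSucc (Fin.last n)) : MvPolynomial (Fin (n + 2)) k) ^ o -
      MvPolynomial.X (Fin.last (n + 1)) * MvPolynomial.X (Fin.castSucc (Fin.last n)) ^ c -
      MvPolynomial.rename (Fin.castSucc ∘ Fin.castSucc) q with hE
  have hφE : φ E = F := by
    rw [hE, hF, map_sub, map_sub, map_mul, map_pow, map_pow, hφlast, hφcast,
      ← MvPolynomial.rename_rename, hφren, Polynomial.C_pow, Polynomial.C_pow]
  have hηF : η F = 0 := by
    rw [← hφE, hηφ]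
    exact Ideal.Quotient.eq_zero_iff_mem.2
      (Ideal.mem_sup_left (Ideal.subset_span (Set.mem_singleton _)))
  have hφI : ∀ x ∈ deformIdeal o c q J, φ x ∈ Ideal.span {F} := by
    have : deformIdeal o c q J ≤ (Ideal.span {F}).comap φ.toRingHom := by
      refine sup_le ?_ ?_
      · rw [Ideal.span_le, Set.singleton_subset_iff]
        change φ E ∈ Ideal.span {F}
        rw [hφE]
        exact Ideal.mem_span_singleton_self F
      · rw [Ideal.map_le_iff_le_comap]
        intro x hx
        change φ (MvPolynomial.rename Fin.castSucc x) ∈ Ideal.span {F}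
        rw [hφren, Ideal.Quotient.eq_zero_iff_mem.2 hx, map_zero]
        exact Ideal.zero_mem _
    exact fun x hx => this hx
  have hφp : ∀ p : Polynomial k,
      φ (Polynomial.aeval (MvPolynomial.X (Fin.last (n + 1))) p) =
        p.map (algebraMap k (MvPolynomial (Fin (n + 1)) k ⧸ J)) := by
    intro p
    rw [← Polynomial.aeval_algHom_apply, hφlast, Polynomial.aeval_X_left_eq_map]
  have main : ∀ p : Polynomial k, p.Monic →
      ∀ x : MvPolynomial (Fin (n + 2)) k ⧸ deformIdeal o c q J,
      deformStructMap o c q J p * x = 0 → x = 0 := by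
    intro p hp x hx
    obtain ⟨x, rfl⟩ := Ideal.Quotient.mk_surjective x
    have h1 : deformStructMap o c q J p = Ideal.Quotient.mk _
        (Polynomial.aeval (MvPolynomial.X (Fin.last (n + 1))) p) := by
      exact Polynomial.aeval_algHom_apply (Ideal.Quotient.mkₐ k (deformIdeal o c q J)) _ p
    rw [h1, ← map_mul, Ideal.Quotient.eq_zero_iff_mem] at hx
    have h2 := hφI _ hx
    rw [map_mul, hφp] at h2
    obtain ⟨g, hg⟩ := Ideal.mem_span_singleton'.1 h2
    obtain ⟨h, hh⟩ := core p hp (φ x) g (by rw [← hg, mul_comm])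
    rw [← hηφ, hh, map_mul, hηF, zero_mul]
  letI : Algebra (Polynomial k) (MvPolynomial (Fin (n + 2)) k ⧸ deformIdeal o c q J) :=
    (deformStructMap o c q J).toAlgebra
  change Module.Flat (Polynomial k) (MvPolynomial (Fin (n + 2)) k ⧸ deformIdeal o c q J)
  have : Module.IsTorsionFree (Polynomial k)
      (MvPolynomial (Fin (n + 2)) k ⧸ deformIdeal o c q J) := by
    refine Module.IsTorsionFree.of_smul_eq_zero fun p x hx => ?_
    by_cases hp : p = 0
    · exact Or.inl hp
    · refine Or.inr (main _ (Polynomial.monic_mul_leadingCoeff_inv hp) x ?_)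
      have hx' : deformStructMap o c q J p * x = 0 := hx
      rw [map_mul, mul_right_comm, hx', zero_mul]
  infer_instance
end
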